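/- arXiv:1609.06253 — 3 statements merged into one kernel-verified Lean document; each statement's English description precedes it below -/
import Mathlib

section
/- Let 𝒢 be a finite graph of groups with base vertex v₀, in which each vertex group G_v has a finite inverse-closed generating set A_v. Suppose N₀ ⊆ A_{v₀}* is a regular prefix-closed set of normal forms for G_{v₀}, and for each directed edge e ∈ E, N_{Tr,e} ⊆ A_{t(e)}* is a regular prefix-closed set containing exactly one representative of each right coset of η_e(G_e) in G_{t(e)}. Then the language Ñ (defined below) is a regular set of normal forms for π₁(𝒢) over the alphabet Ã (i.e. the evaluation map restricts to a bijection from Ñ onto π₁(𝒢)), and N := defl(Ñ) is a regular prefix-closed set of normal forms for π₁(𝒢) over the alphabet A. -/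
/-!
The fundamental group is made to act on normal forms, in the manner of van der Waerden.

For a vertex `u`, let `X u` be the set of pairs of a group element `g : Gv u` and a list of
syllables `e₁t₁⋯e_kt_k` which may follow it in a normal form for paths starting at `u`. The group
`Gv u` acts on `X u` by left multiplication, and an edge `e` induces a map from `X (t e)` to the
set `X (t (bar e))` over its initial vertex: write the initial group element as `η e x * w` with
`w` in the transversal, move `η e x` across `e`, and then either add the syllable `e w`, or cancel
`e` against a first syllable `bar e`, or, when `e` is a tree edge and nothing follows, drop it. This
is the relation `Step`. It is functional, and visibly symmetric under exchanging `e` and `bar e`, so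
that the map of an edge is a bijection (`edgeEquiv`) inverse to that of the reverse edge. It
satisfies the relation `e η_e(x) = η_ē(x) e` (`edgeEquiv_vertexPerm`).

The sets `X u` with these bijections form a local system over the graph. It is trivial over the
spanning tree (`exists_trivialization`), where transport to `u` follows the unique reduced tree
path. Identifying all `X u` with `X v₀` in this way, tree edges act trivially, so all relators act
trivially and the fundamental group acts on `X v₀` (`rho`). Evaluation of normal forms is
equivariant, and acting with the value of a normal form on the trivial one gives that normal form
back. Hence evaluation is a bijection (`ev_bijective`).

As to the languages, normal form words are sequences of segments which are separated by edge
letters and taken from finitely many regular languages. The condition on consecutive segments, and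
that on the last one, concern only their indices and whether they are empty; an automaton assembled
from the given ones checks them (`regular_segWord`). Deflation erases some letters and so preserves regularity
(`regular_filterMap`), and it does not change the value of a word. A prefix of a deflated normal
form lifts to a prefix of the normal form, from which trailing tree edges may be dropped
(`prefix_body`); the given languages being prefix-closed, this is a normal form.
-/

/-- Evaluation of a word over an alphabet `α` in a monoid `G` via a letter map `π`. -/
def wordVal {G : Type} [Monoid G] {α : Type} (π : α → G) (w : List α) : G :=
  (w.map π).prod

/-- A language is prefix-closed if it contains every prefix of each of its words. -/
def PrefixClosed {α : Type} (N : Set (List α)) : Prop :=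
  ∀ w ∈ N, ∀ p : List α, p <+: w → p ∈ N

/-- `(α, π, inv)` is a finite inverse-closed generating set for the group `G`:
no letter represents the identity, `inv` is an involution with `π (inv a) = (π a)⁻¹`,
and the letters generate `G`. -/
structure IsInvGenSet (G : Type) [Group G] {α : Type} (π : α → G) (inv : α → α) : Prop where
  ne_one : ∀ a, π a ≠ 1
  inv_invol : ∀ a, inv (inv a) = a
  val_inv : ∀ a, π (inv a) = (π a)⁻¹
  gen : Subgroup.closure (Set.range π) = ⊤

/-- A language over `α` is regular if it is accepted by a finite state automaton. -/
def IsRegularLang {α : Type} (L : Set (List α)) : Prop :=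
  ∃ (σ : Type) (_ : Fintype σ) (M : DFA α σ), M.accepts = L

/-- The padded word over `(α ∪ {$})²` corresponding to a pair of words;
`none` plays the role of the padding symbol `$`. -/
def padWord2 {α : Type} (p : List α × List α) : List (Option α × Option α) :=
  (List.range (max p.1.length p.2.length)).map (fun i => (p.1[i]?, p.2[i]?))

/-- Synchronous regularity of a set of pairs of words. -/
def SyncRegular2 {α : Type} (L : Set (List α × List α)) : Prop :=
  IsRegularLang (padWord2 '' L)

/-- The padded word over `(α ∪ {$})³` corresponding to a triple of words. -/
def padWord3 {α : Type} (p : List α × List α × List α) :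
    List (Option α × Option α × Option α) :=
  (List.range (max p.1.length (max p.2.1.length p.2.2.length))).map
    (fun i => (p.1[i]?, p.2.1[i]?, p.2.2[i]?))

/-- Synchronous regularity of a set of triples of words. -/
def SyncRegular3 {α : Type} (L : Set (List α × List α × List α)) : Prop :=
  IsRegularLang (padWord3 '' L)

/-- `IsEdgePath ι τ u p v` asserts that the list of directed edges `p` is an edge
path from the vertex `u` to the vertex `v`, where `ι` and `τ` give the initial and
terminal vertices of a directed edge. -/
def IsEdgePath {V E : Type} (ι τ : E → V) : V → List E → V → Prop
  | u, [], v => u = v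
  | u, e :: p, v => ι e = u ∧ IsEdgePath ι τ (τ e) p v

section GraphOfGroups

variable {V E : Type} (bar : E → E) (t : E → V)
  (Gv : V → Type) [instGv : ∀ v, Group (Gv v)]
  (Ge : E → Type) [instGe : ∀ e, Group (Ge e)]
  (T : Set E)

/-- The group `(∗_{v ∈ V} G_v) ∗ F(E₁)`, where `E₁` is the set of directed edges
not in the spanning tree `T`. -/
def GoGBase : Type :=
  Monoid.Coprod (Monoid.CoprodI Gv) (FreeGroup {e : E // e ∉ T})

instance : Group (GoGBase Gv T) :=
  inferInstanceAs (Group (Monoid.Coprod (Monoid.CoprodI Gv) (FreeGroup {e : E // e ∉ T})))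

/-- The canonical map of a vertex group into `GoGBase`. -/
def gogVin (v : V) : Gv v →* GoGBase Gv T :=
  Monoid.Coprod.inl.comp Monoid.CoprodI.of

/-- The generator of `GoGBase` corresponding to an edge outside the spanning tree. -/
def gogEin (e : {e : E // e ∉ T}) : GoGBase Gv T :=
  Monoid.Coprod.inr (FreeGroup.of e)

variable (η : ∀ e, Ge e →* Gv (t e)) (hGe : ∀ e, Ge (bar e) = Ge e)

/-- The relators defining the fundamental group of the graph of groups:
`ē = e⁻¹` for edges outside the tree, `η_e(g) = η_{ē}(g)` for tree edges, and
`e·η_e(g)·e⁻¹ = η_{ē}(g)` for non-tree edges. -/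
def gogRels : Set (GoGBase Gv T) :=
  {x | ∃ (e : E) (he : e ∉ T) (hbe : bar e ∉ T),
      x = gogEin Gv T ⟨bar e, hbe⟩ * gogEin Gv T ⟨e, he⟩} ∪
  {x | ∃ e ∈ T, ∃ g : Ge e,
      x = gogVin Gv T (t e) (η e g) *
        (gogVin Gv T (t (bar e)) (η (bar e) (cast (hGe e).symm g)))⁻¹} ∪
  {x | ∃ (e : E) (he : e ∉ T) (g : Ge e),
      x = gogEin Gv T ⟨e, he⟩ * gogVin Gv T (t e) (η e g) * (gogEin Gv T ⟨e, he⟩)⁻¹ *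
        (gogVin Gv T (t (bar e)) (η (bar e) (cast (hGe e).symm g)))⁻¹}

/-- The fundamental group of the graph of groups (with respect to the chosen
spanning tree `T`). -/
def GoGFund : Type :=
  GoGBase Gv T ⧸ Subgroup.normalClosure (gogRels bar t Gv Ge T η hGe)

instance : Group (GoGFund bar t Gv Ge T η hGe) :=
  QuotientGroup.Quotient.group _

end GraphOfGroups

section GoGLang

variable {V E : Type} (bar : E → E) (t : E → V)
  (Gv : V → Type) [instGv : ∀ v, Group (Gv v)]
  (Ge : E → Type) [instGe : ∀ e, Group (Ge e)]
  (T : Set E)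
  (η : ∀ e, Ge e →* Gv (t e)) (hGe : ∀ e, Ge (bar e) = Ge e)
  (αv : V → Type)

/-- The lift of a word over the vertex alphabet `αv v` to a word over the alphabet
`Ã = (⊔_v αv v) ⊔ E`. -/
def gogLift (v : V) (w : List (αv v)) : List ((Σ v : V, αv v) ⊕ E) :=
  w.map (fun x => Sum.inl ⟨v, x⟩)

variable (πv : ∀ v, αv v → Gv v)

/-- The evaluation of a letter of `Ã = (⊔_v αv v) ⊔ E` in the fundamental group:
vertex letters go to the image of the corresponding vertex group element, non-tree
edges to the corresponding generator, and tree edges to the identity. -/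
noncomputable def gogEvalTilde : ((Σ v : V, αv v) ⊕ E) → GoGFund bar t Gv Ge T η hGe
  | Sum.inl ⟨v, x⟩ =>
      QuotientGroup.mk' (Subgroup.normalClosure (gogRels bar t Gv Ge T η hGe))
        (gogVin Gv T v (πv v x))
  | Sum.inr e =>
      open Classical in
      if h : e ∈ T then 1 else
        QuotientGroup.mk' (Subgroup.normalClosure (gogRels bar t Gv Ge T η hGe))
          (gogEin Gv T ⟨e, h⟩)

/-- The evaluation of a letter of `A = (⊔_v αv v) ⊔ E₁` in the fundamental group. -/
def gogEvalA : ((Σ v : V, αv v) ⊕ {e : E // e ∉ T}) → GoGFund bar t Gv Ge T η hGe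
  | Sum.inl ⟨v, x⟩ =>
      QuotientGroup.mk' (Subgroup.normalClosure (gogRels bar t Gv Ge T η hGe))
        (gogVin Gv T v (πv v x))
  | Sum.inr e =>
      QuotientGroup.mk' (Subgroup.normalClosure (gogRels bar t Gv Ge T η hGe))
        (gogEin Gv T e)

/-- The deflation of a letter of `Ã`: letters of vertex alphabets and non-tree edge
letters are kept (as letters of `A`), tree edge letters are deleted. -/
noncomputable def gogDeflLetter :
    ((Σ v : V, αv v) ⊕ E) → List ((Σ v : V, αv v) ⊕ {e : E // e ∉ T})
  | Sum.inl x => [Sum.inl x]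
  | Sum.inr e =>
      open Classical in
      if h : e ∈ T then [] else [Sum.inr ⟨e, h⟩]

/-- The deflation map `defl : Ã* → A*`. -/
noncomputable def gogDefl (w : List ((Σ v : V, αv v) ⊕ E)) :
    List ((Σ v : V, αv v) ⊕ {e : E // e ∉ T}) :=
  w.flatMap (gogDeflLetter T αv)

open Classical in
/-- `trim`: the maximal prefix of a word over `Ã` whose last letter is not a
tree edge letter. -/
noncomputable def gogTrim (w : List ((Σ v : V, αv v) ⊕ E)) :
    List ((Σ v : V, αv v) ⊕ E) :=
  (w.reverse.dropWhile (fun a => decide (∃ e : E, a = Sum.inr e ∧ e ∈ T))).reverse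

variable (v₀ : V)

/-- The set `Ñ` of normal form words `w₀e₁t₁e₂t₂⋯e_kt_k` over `Ã` built from the
normal forms `N₀` for the base vertex group and the transversal normal forms
`NTr e` for the edge groups. -/
def gogNTilde (N₀ : Set (List (αv v₀))) (NTr : ∀ e : E, Set (List (αv (t e)))) :
    Set (List ((Σ v : V, αv v) ⊕ E)) :=
  { w | ∃ (k : ℕ) (w₀ : List (αv v₀)) (es : Fin k → E)
        (ts : (j : Fin k) → List (αv (t (es j)))),
      w₀ ∈ N₀ ∧
      (∀ h : 0 < k, t (bar (es ⟨0, h⟩)) = v₀) ∧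
      (∀ (j : ℕ) (h : j + 1 < k),
        t (es ⟨j, Nat.lt_of_succ_lt h⟩) = t (bar (es ⟨j + 1, h⟩))) ∧
      (∀ j : Fin k, ts j ∈ NTr (es j)) ∧
      (∀ (j : ℕ) (h : j + 1 < k),
        es ⟨j + 1, h⟩ = bar (es ⟨j, Nat.lt_of_succ_lt h⟩) →
        ts ⟨j, Nat.lt_of_succ_lt h⟩ ≠ []) ∧
      (∀ h : 0 < k, ts ⟨k - 1, Nat.sub_lt h Nat.one_pos⟩ ≠ [] ∨
        es ⟨k - 1, Nat.sub_lt h Nat.one_pos⟩ ∉ T) ∧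
      w = gogLift αv v₀ w₀ ++
        (List.ofFn (fun j : Fin k =>
          Sum.inr (es j) :: gogLift αv (t (es j)) (ts j))).flatten }

end GoGLang


namespace GoGNF

/-! ### Regular languages -/

/-- The image of a regular language under a letter-to-letter-or-nothing substitution is regular:
read the letters sent to `none` as `ε`-moves. -/
lemma regular_filterMap {α β : Type} (f : α → Option β) {L : Set (List α)}
    (hL : IsRegularLang L) : IsRegularLang (List.filterMap f '' L) := by
  obtain ⟨σ, hσ, M, rfl⟩ := hL
  let N : εNFA β σ :=
    { step := fun q o => {q' | ∃ a, f a = o ∧ q' = M.step q a}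
      start := {M.start}
      accept := M.accept }
  have path : ∀ (y : List (Option β)) (s u : σ),
      N.IsPath s u y ↔ ∃ w : List α, y = w.map f ∧ u = M.evalFrom s w := by
    intro y
    induction y with
    | nil =>
      intro s u
      rw [εNFA.isPath_nil]
      constructor
      · rintro rfl; exact ⟨[], rfl, rfl⟩
      · rintro ⟨w, hw, rfl⟩
        obtain rfl : w = [] := by simpa using hw.symm
        rfl
    | cons o y ih =>
      intro s u
      rw [εNFA.isPath_iff]
      constructor
      · rintro (⟨_, h⟩ | ⟨q, o', y', hq, hp, h⟩)
        · cases h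
        · cases h
          obtain ⟨a, ha, rfl⟩ := hq
          obtain ⟨w, rfl, rfl⟩ := (ih _ _).1 hp
          exact ⟨a :: w, by simp [ha], by simp⟩
      · rintro ⟨w, hw, rfl⟩
        cases w with
        | nil => cases hw
        | cons a w =>
          simp only [List.map_cons, List.cons.injEq] at hw
          exact Or.inr ⟨M.step s a, o, y, ⟨a, hw.1.symm, rfl⟩,
            (ih _ _).2 ⟨w, hw.2, by simp⟩, rfl⟩
  refine ⟨Set σ, inferInstance, N.toNFA.toDFA, ?_⟩
  rw [NFA.toDFA_correct, εNFA.toNFA_correct]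
  ext x
  rw [εNFA.mem_accepts_iff_exists_path]
  constructor
  · rintro ⟨s, u, y, hs, hu, rfl, hp⟩
    obtain ⟨w, rfl, rfl⟩ := (path _ _ _).1 hp
    obtain rfl : s = M.start := hs
    exact ⟨w, hu, by simp [List.reduceOption, List.filterMap_map]⟩
  · rintro ⟨w, hw, rfl⟩
    exact ⟨M.start, _, w.map f, rfl, hw, by simp [List.reduceOption, List.filterMap_map],
      (path _ _ _).2 ⟨w, rfl, rfl⟩⟩

section Segments

variable {Γ E : Type}

/-- The word `w e₁ w₁ e₂ w₂ ⋯` over `Γ ⊔ E` with initial segment `w` and remaining segments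
`(e₁, w₁), (e₂, w₂), …`. -/
def segWord : List Γ → List (E × List Γ) → List (Γ ⊕ E)
  | w, [] => w.map Sum.inl
  | w, (e, w') :: L => w.map Sum.inl ++ Sum.inr e :: segWord w' L

lemma segWord_cons (a : Γ) (w : List Γ) (L : List (E × List Γ)) :
    segWord (a :: w) L = Sum.inl a :: segWord w L := by
  rcases L with _ | ⟨⟨e, w'⟩, L⟩ <;> rfl

variable {σ : Option E → Type} (M : ∀ o, DFA Γ (σ o))
  (nxt : Option E → Bool → E → Prop) (fin : Option E → Bool → Prop)

/-- A segmented word is good when the segment after `e` (or the initial one, `none`) is accepted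
by the automaton `M` of its index, consecutive segments satisfy `nxt` and the last one satisfies
`fin`; both conditions see only the index of the segment and whether it is empty. The first segment
is read from the state `q`, and `b` says that no letter of it has been read before. -/
def SegGood : (o : Option E) → σ o → Bool → List Γ → List (E × List Γ) → Prop
  | o, q, b, w, [] => (M o).evalFrom q w ∈ (M o).accept ∧ fin o (b && w.isEmpty)
  | o, q, b, w, (e, w') :: L => (M o).evalFrom q w ∈ (M o).accept ∧ nxt o (b && w.isEmpty) e ∧
      SegGood (some e) (M (some e)).start true w' L

lemma segGood_cons (o : Option E) (q : σ o) (b : Bool) (a : Γ) (w : List Γ)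
    (L : List (E × List Γ)) :
    SegGood M nxt fin o q b (a :: w) L ↔ SegGood M nxt fin o ((M o).step q a) false w L := by
  rcases L with _ | ⟨⟨e, w'⟩, L⟩ <;> simp [SegGood]

open Classical in
/-- The automaton reading good segmented words: its states are a segment index, a state of the
automaton of that segment and the flag recording emptiness, together with the dead state `none`. -/
noncomputable def segDFA (o₀ : Option E) : DFA (Γ ⊕ E) (Option (Σ o : Option E, σ o × Bool)) where
  step s x := match s, x with
    | none, _ => none
    | some ⟨o, q, _⟩, Sum.inl a => some ⟨o, (M o).step q a, false⟩
    | some ⟨o, q, b⟩, Sum.inr e =>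
        if q ∈ (M o).accept ∧ nxt o b e then some ⟨some e, (M (some e)).start, true⟩ else none
  start := some ⟨o₀, (M o₀).start, true⟩
  accept := {s | ∃ o q b, s = some ⟨o, q, b⟩ ∧ q ∈ (M o).accept ∧ fin o b}

lemma segDFA_dead (o₀ : Option E) (z : List (Γ ⊕ E)) :
    (segDFA M nxt fin o₀).evalFrom none z = none := by
  induction z with
  | nil => rfl
  | cons x z ih => rw [DFA.evalFrom_cons]; exact ih

lemma segDFA_evalFrom (o₀ : Option E) (z : List (Γ ⊕ E)) : ∀ (o : Option E) (q : σ o) (b : Bool),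
    (segDFA M nxt fin o₀).evalFrom (some ⟨o, q, b⟩) z ∈ (segDFA M nxt fin o₀).accept ↔
      ∃ w L, z = segWord w L ∧ SegGood M nxt fin o q b w L := by
  induction z with
  | nil =>
    intro o q b
    constructor
    · rintro ⟨o', q', b', h, hq, hf⟩
      cases h
      exact ⟨[], [], rfl, hq, by simpa using hf⟩
    · rintro ⟨w, L, hz, h⟩
      rcases L with _ | ⟨⟨e, w'⟩, L⟩
      · obtain rfl : w = [] := by simpa [segWord] using hz.symm
        exact ⟨o, q, b, rfl, h.1, by simpa using h.2⟩
      · simp [segWord] at hz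
  | cons x z ih =>
    intro o q b
    rw [DFA.evalFrom_cons]
    rcases x with a | e
    · refine (ih o ((M o).step q a) false).trans ⟨?_, ?_⟩
      · rintro ⟨w, L, rfl, h⟩
        exact ⟨a :: w, L, (segWord_cons _ _ _).symm, (segGood_cons ..).2 h⟩
      · rintro ⟨w, L, hz, h⟩
        rcases w with _ | ⟨a', w⟩
        · rcases L with _ | ⟨⟨e, w'⟩, L⟩ <;> simp [segWord] at hz
        · rw [segWord_cons] at hz
          simp only [List.cons.injEq, Sum.inl.injEq] at hz
          obtain ⟨rfl, rfl⟩ := hz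
          exact ⟨w, L, rfl, (segGood_cons ..).1 h⟩
    · by_cases hc : q ∈ (M o).accept ∧ nxt o b e
      · have hs : (segDFA M nxt fin o₀).step (some ⟨o, q, b⟩) (Sum.inr e) =
            some ⟨some e, (M (some e)).start, true⟩ := by simp [segDFA, hc]
        rw [hs, ih]
        constructor
        · rintro ⟨w, L, rfl, h⟩
          exact ⟨[], (e, w) :: L, rfl, hc.1, by simpa using hc.2, h⟩
        · rintro ⟨w, L, hz, h⟩
          rcases w with _ | ⟨a, w⟩
          · rcases L with _ | ⟨⟨e', w'⟩, L⟩
            · simp [segWord] at hz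
            · simp only [segWord, List.map_nil, List.nil_append, List.cons.injEq,
                Sum.inr.injEq] at hz
              obtain ⟨rfl, rfl⟩ := hz
              exact ⟨w', L, rfl, h.2.2⟩
          · rw [segWord_cons] at hz; simp at hz
      · have hs : (segDFA M nxt fin o₀).step (some ⟨o, q, b⟩) (Sum.inr e) = none := by
          simp [segDFA, hc]
        rw [hs, segDFA_dead]
        constructor
        · rintro ⟨o', q', b', h, -⟩
          cases h
        · rintro ⟨w, L, hz, h⟩
          rcases w with _ | ⟨a, w⟩
          · rcases L with _ | ⟨⟨e', w'⟩, L⟩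
            · simp [segWord] at hz
            · simp only [segWord, List.map_nil, List.nil_append, List.cons.injEq,
                Sum.inr.injEq] at hz
              obtain ⟨rfl, rfl⟩ := hz
              exact absurd ⟨h.1, by simpa using h.2.1⟩ hc
          · rw [segWord_cons] at hz; simp at hz

/-- The words with a good segmentation form a regular language. -/
lemma regular_segWord [Fintype E] [∀ o, Fintype (σ o)] (o₀ : Option E) :
    IsRegularLang {z | ∃ w L, z = segWord w L ∧
      SegGood M nxt fin o₀ (M o₀).start true w L} := by
  refine ⟨_, inferInstance, segDFA M nxt fin o₀, ?_⟩
  ext z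
  exact segDFA_evalFrom M nxt fin o₀ z o₀ _ true

end Segments

end GoGNF

namespace GoGNF

/-! ### Trivialising a local system over a tree -/

/-- `e` and `f` are the two orientations of one edge. Recording both equations lets the vertices
`t (bar e)` and `t (bar (bar e))` be written `t f` and `t e`, so that no transport is needed. -/
def IsPair {E : Type} (bar : E → E) (e f : E) : Prop := f = bar e ∧ e = bar f

lemma IsPair.symm {E : Type} {bar : E → E} {e f : E} (h : IsPair bar e f) : IsPair bar f e :=
  ⟨h.2, h.1⟩

lemma isPair_bar {E : Type} {bar : E → E} (hbar : ∀ e, bar (bar e) = e) (e : E) :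
    IsPair bar e (bar e) := ⟨rfl, (hbar e).symm⟩

section LocalSystem

variable {V E : Type} {bar : E → E} {t : E → V}
  (X : V → Type) (m : ∀ e f, IsPair bar e f → (X (t e) ≃ X (t f)))
  (hm : ∀ e f (h : IsPair bar e f) x, m f e h.symm (m e f h x) = x)
  (hbar : ∀ e, bar (bar e) = e)

/-- Transport of the fibres along an edge path, from the fibre over its end to the fibre over its
start. -/
def transportPath {v₀ : V} : ∀ (u : V) (p : List E), IsEdgePath (fun e => t (bar e)) t u p v₀ →
    (X v₀ ≃ X u)
  | _, [], h => Equiv.cast (congrArg X (Eq.symm h))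
  | _, e :: p, h => (transportPath (t e) p h.2).trans
      ((m e (bar e) (isPair_bar hbar e)).trans (Equiv.cast (congrArg X h.1)))

include hm in
lemma transport_cancel (e f e₂ : E) (h : IsPair bar f e₂) (h' : IsPair bar e f) (he : t e₂ = t e)
    (z : X (t f)) : m e f h' (cast (congrArg X he) (m f e₂ h z)) = z := by
  obtain rfl : e₂ = e := h.1.trans h'.2.symm
  exact hm f e₂ h z

include hm hbar in
/-- A local system over a tree is trivial: the fibre over `v₀` is identified with all the other
fibres, compatibly with the transport along tree edges. -/
lemma exists_trivialization {T : Set E}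
    (hTtree : ∀ u v : V, ∃! p : List E, (∀ e ∈ p, e ∈ T) ∧
      IsEdgePath (fun e => t (bar e)) t u p v ∧ List.IsChain (fun e f => f ≠ bar e) p)
    (v₀ : V) :
    ∃ φ : ∀ v, X v₀ ≃ X v, φ v₀ = Equiv.refl _ ∧
      ∀ e ∈ T, ∀ f (h : IsPair bar e f) y, m e f h (φ (t e) y) = φ (t f) y := by
  choose p hp hpu using fun u => hTtree u v₀
  have key : ∀ u q, ((∀ e ∈ q, e ∈ T) ∧ IsEdgePath (fun e => t (bar e)) t u q v₀ ∧
      List.IsChain (fun e f => f ≠ bar e) q) →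
      ∀ (h : IsEdgePath (fun e => t (bar e)) t u (p u) v₀)
        (h' : IsEdgePath (fun e => t (bar e)) t u q v₀),
        transportPath X m hbar u (p u) h = transportPath X m hbar u q h' := by
    intro u q hq h h'
    have := hpu u q hq
    subst this
    rfl
  refine ⟨fun v => transportPath X m hbar v (p v) (hp v).2.1, ?_, ?_⟩
  · exact key v₀ [] ⟨by simp, rfl, by simp⟩ _ rfl
  · rintro e he f h y
    obtain rfl : f = bar e := h.1
    have hch := (hp (t e)).2.2
    by_cases hc : ∃ q, p (t e) = bar e :: q
    · -- the reduced path from `t e` starts by going back along `e`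
      obtain ⟨q, hq⟩ := hc
      have hpe := hp (t e)
      rw [hq] at hpe
      have h1 := key (t e) (bar e :: q) hpe (hp (t e)).2.1 hpe.2.1
      have h2 := key (t (bar e)) q ⟨fun x hx => hpe.1 x (List.mem_cons_of_mem _ hx), hpe.2.1.2,
        hpe.2.2.tail⟩ (hp _).2.1 hpe.2.1.2
      dsimp only
      rw [h1, h2]
      exact transport_cancel X m hm e (bar e) (bar (bar e)) _ _ (congrArg t (hbar e)) _
    · have hpe : (∀ x ∈ e :: p (t e), x ∈ T) ∧
          IsEdgePath (fun e => t (bar e)) t (t (bar e)) (e :: p (t e)) v₀ ∧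
          List.IsChain (fun e f => f ≠ bar e) (e :: p (t e)) := by
        refine ⟨?_, ⟨rfl, (hp _).2.1⟩, ?_⟩
        · intro x hx
          rcases List.mem_cons.1 hx with rfl | hx
          exacts [he, (hp _).1 x hx]
        · rw [List.isChain_cons]
          refine ⟨?_, hch⟩
          intro y hy hye
          subst hye
          rcases hpt : p (t e) with _ | ⟨c, q⟩
          · simp [hpt] at hy
          · rw [hpt] at hy
            simp only [List.head?_cons, Option.mem_some_iff] at hy
            exact hc ⟨q, by rw [hpt, hy]⟩
      have h1 := key (t (bar e)) (e :: p (t e)) hpe (hp _).2.1 hpe.2.1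
      dsimp only
      rw [h1]
      rfl

/-- A quantity which does not change along tree edges is constant on the tree. -/
lemma tree_const {α : Type} {T : Set E}
    (F : V → α) (hF : ∀ e ∈ T, F (t e) = F (t (bar e))) {v₀ : V} :
    ∀ (p : List E) (u : V), (∀ e ∈ p, e ∈ T) → IsEdgePath (fun e => t (bar e)) t u p v₀ →
      F u = F v₀
  | [], u, _, h => congrArg F h
  | e :: p, u, hT, h => by
    rw [← tree_const F hF p (t e) (fun x hx => hT x (List.mem_cons_of_mem _ hx)) h.2,
      hF e (hT e List.mem_cons_self), ← h.1]

end LocalSystem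

/-! ### Normal forms and the action of edges on them -/

section Action

variable {V E : Type} {bar : E → E} {t : E → V}
  {Gv : V → Type} [instGv : ∀ v, Group (Gv v)]
  {Ge : E → Type} [instGe : ∀ e, Group (Ge e)]
  {T : Set E}
  {η : ∀ e, Ge e →* Gv (t e)} (hGe : ∀ e, Ge (bar e) = Ge e)
  {αv : V → Type} {πv : ∀ v, αv v → Gv v} {NTr : ∀ e : E, Set (List (αv (t e)))}

/-- The identification of the edge groups of the two orientations of an edge. -/
def theta {e f : E} (h : IsPair bar e f) (x : Ge e) : Ge f :=
  cast ((hGe e).symm.trans (congrArg Ge h.1.symm)) x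

omit instGe in
lemma theta_theta {e f : E} (h : IsPair bar e f) (x : Ge e) :
    theta hGe h.symm (theta hGe h x) = x := by
  simp [theta]

lemma cast_mul {A B : Type} (h : A = B) (ga : Group A) (gb : Group B) (hg : HEq gb ga) (x y : A) :
    cast h (x * y) = cast h x * cast h y := by
  subst h
  obtain rfl := eq_of_heq hg
  rfl

lemma theta_mul (hGrpBar : ∀ e, HEq (instGe (bar e)) (instGe e)) {e f : E} (h : IsPair bar e f)
    (x y : Ge e) : theta hGe h (x * y) = theta hGe h x * theta hGe h y := by
  obtain ⟨rfl, -⟩ := id h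
  exact cast_mul _ _ _ (hGrpBar e) x y

variable (bar t Gv Ge T η αv πv NTr) in
/-- The facts about a graph of groups with coset transversals on which the normal form argument
rests. The last three say that `NTr e` is a transversal of the right cosets of `η e`, with the
empty word representing the trivial coset. -/
structure Laws : Prop where
  bar_bar : ∀ e, bar (bar e) = e
  bar_mem : ∀ e ∈ T, bar e ∈ T
  theta_mul : ∀ {e f : E} (h : IsPair bar e f) (x y : Ge e),
    theta hGe h (x * y) = theta hGe h x * theta hGe h y
  nil_mem : ∀ e, [] ∈ NTr e
  exists_decomp : ∀ e g, ∃ x, ∃ w ∈ NTr e, g = η e x * wordVal (πv (t e)) w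
  decomp_unique : ∀ e x x' w w', w ∈ NTr e → w' ∈ NTr e →
    η e x * wordVal (πv (t e)) w = η e x' * wordVal (πv (t e)) w' → x = x' ∧ w = w'

variable (t αv) in
/-- A syllable `e w` of a normal form: an edge followed by a word over the alphabet of the vertex
it leads to. -/
abbrev Syl := Σ e : E, List (αv (t e))

variable (bar t T αv) in
/-- The condition for `L` to follow a syllable `(e, ε)`: if `L` is empty then `e` is not a tree
edge, and if `L` is not empty then it does not start by going back along `e`. -/
def MayFollow (e : E) (L : List (Syl t αv)) : Prop :=
  (L = [] → e ∉ T) ∧ ∀ a ∈ L.head?, a.1 ≠ bar e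

variable (bar t T αv NTr) in
/-- The list of syllables `L` is the tail `e₁t₁⋯e_kt_k` of a normal form for paths starting
at `u`. -/
def Valid : V → List (Syl t αv) → Prop
  | _, [] => True
  | u, a :: L => t (bar a.1) = u ∧ a.2 ∈ NTr a.1 ∧ (a.2 = [] → MayFollow bar t T αv a.1 L) ∧
      Valid (t a.1) L

variable (bar t Gv T αv NTr) in
/-- The normal forms of paths starting at `u`, with the initial segment replaced by its value in
the group of `u`. -/
abbrev NF (u : V) : Type := {p : Gv u × List (Syl t αv) // Valid bar t T αv NTr u p.2}

variable (T η πv NTr) in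
/-- `Step hGe h a b` says that `b` is the normal form of `e a`. Write the initial group element of
`a` as `η e x * w` with `w` a coset representative; moving `η e x` across `e`, the edge `e` is
either added to the normal form together with `w`, or cancels against the first edge of `a`, or is
absorbed as a trailing tree edge. -/
def Step {e f : E} (h : IsPair bar e f)
    (a : Gv (t e) × List (Syl t αv)) (b : Gv (t f) × List (Syl t αv)) : Prop :=
  (∃ x w, Valid bar t T αv NTr (t f) (⟨e, w⟩ :: a.2) ∧ a.1 = η e x * wordVal (πv (t e)) w ∧
    b = (η f (theta hGe h x), ⟨e, w⟩ :: a.2)) ∨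
  (∃ x w, Valid bar t T αv NTr (t e) (⟨f, w⟩ :: b.2) ∧
    b.1 = η f (theta hGe h x) * wordVal (πv (t f)) w ∧ a = (η e x, ⟨f, w⟩ :: b.2)) ∨
  (e ∈ T ∧ ∃ x, a = (η e x, []) ∧ b = (η f (theta hGe h x), []))

variable (S : Laws bar t Gv Ge T η hGe αv πv NTr) {e f : E} (h : IsPair bar e f)

include S

lemma Step.symm {a : Gv (t e) × List (Syl t αv)} {b : Gv (t f) × List (Syl t αv)}
    (hs : Step T η hGe πv NTr h a b) : Step T η hGe πv NTr h.symm b a := by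
  rcases hs with ⟨x, w, hv, ha, hb⟩ | ⟨x, w, hv, hb, ha⟩ | ⟨hT, x, ha, hb⟩
  · exact Or.inr (Or.inl ⟨theta hGe h x, w, hv, by rw [theta_theta]; exact ha, hb⟩)
  · exact Or.inl ⟨theta hGe h x, w, hv, hb, by rw [theta_theta]; exact ha⟩
  · exact Or.inr (Or.inr ⟨h.1 ▸ S.bar_mem e hT, theta hGe h x, hb, by rw [theta_theta]; exact ha⟩)

lemma Step.exists (a : NF bar t Gv T αv NTr (t e)) :
    ∃ b : NF bar t Gv T αv NTr (t f), Step T η hGe πv NTr h a.1 b.1 := by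
  obtain ⟨⟨g, L⟩, hL⟩ := a
  obtain ⟨x, w, hw, rfl⟩ := S.exists_decomp e g
  have hf : t (bar e) = t f := by rw [h.1]
  have push : (w = [] → MayFollow bar t T αv e L) → ∃ b : NF bar t Gv T αv NTr (t f),
      Step T η hGe πv NTr h (η e x * wordVal (πv (t e)) w, L) b.1 := fun hc =>
    ⟨⟨(η f (theta hGe h x), ⟨e, w⟩ :: L), hf, hw, hc, hL⟩, Or.inl ⟨x, w, ⟨hf, hw, hc, hL⟩, rfl, rfl⟩⟩
  by_cases hwe : w = []
  · subst hwe
    rcases L with _ | ⟨⟨c, w'⟩, L⟩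
    · by_cases hT : e ∈ T
      · exact ⟨⟨(η f (theta hGe h x), []), trivial⟩,
          Or.inr (Or.inr ⟨hT, x, by simp [wordVal], rfl⟩)⟩
      · exact push fun _ => ⟨fun _ => hT, by simp⟩
    · by_cases hc : c = f
      · subst hc
        exact ⟨⟨(η c (theta hGe h x) * wordVal (πv (t c)) w', L), hL.2.2.2⟩,
          Or.inr (Or.inl ⟨x, w', hL, rfl, by simp [wordVal]⟩)⟩
      · exact push fun _ => ⟨by simp, by
          rintro a ha
          obtain rfl : ⟨c, w'⟩ = a := by simpa using ha
          exact fun hh => hc (hh.trans h.1.symm)⟩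
  · exact push fun hh => absurd hh hwe

lemma Step.unique {a : Gv (t e) × List (Syl t αv)} {b b' : Gv (t f) × List (Syl t αv)}
    (hs : Step T η hGe πv NTr h a b) (hs' : Step T η hGe πv NTr h a b') : b = b' := by
  have hnil : ∀ {x y : Ge e} {w}, w ∈ NTr e → η e x * wordVal (πv (t e)) w = η e y → w = [] :=
    fun {x y w} hw hh => (S.decomp_unique e x y w [] hw (S.nil_mem e)
      (by simpa [wordVal] using hh)).2
  have hinj : ∀ {x y : Ge e}, η e x = η e y → x = y := fun {x y} hh =>
    (S.decomp_unique e x y [] [] (S.nil_mem e) (S.nil_mem e) (by rw [hh])).1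
  obtain ⟨g, L⟩ := a
  obtain ⟨g₁, L₁⟩ := b
  obtain ⟨g₂, L₂⟩ := b'
  have push_cancel : ∀ {x y : Ge e} {w w' L'}, Valid bar t T αv NTr (t f) (⟨e, w⟩ :: L) →
      g = η e x * wordVal (πv (t e)) w → (g, L) = (η e y, ⟨f, w'⟩ :: L') → False := by
    intro x y w w' L' hv hg ha
    simp only [Prod.mk.injEq] at ha
    obtain ⟨rfl, rfl⟩ := ha
    exact (hv.2.2.1 (hnil hv.2.1 hg.symm)).2 ⟨f, w'⟩ (by simp) h.1
  have push_tree : ∀ {x y : Ge e} {w}, Valid bar t T αv NTr (t f) (⟨e, w⟩ :: L) →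
      g = η e x * wordVal (πv (t e)) w → e ∈ T → (g, L) = (η e y, []) → False := by
    intro x y w hv hg hT ha
    simp only [Prod.mk.injEq] at ha
    obtain ⟨rfl, rfl⟩ := ha
    exact (hv.2.2.1 (hnil hv.2.1 hg.symm)).1 rfl hT
  rcases hs with ⟨x, w, hv, ha, hb⟩ | ⟨x, w, hv, hb, ha⟩ | ⟨hT, x, ha, hb⟩ <;>
  rcases hs' with ⟨y, w', hv', ha', hb'⟩ | ⟨y, w', hv', hb', ha'⟩ | ⟨hT', y, ha', hb'⟩
  · obtain ⟨rfl, rfl⟩ := S.decomp_unique e x y w w' hv.2.1 hv'.2.1 (ha.symm.trans ha')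
    rw [hb, hb']
  · exact (push_cancel hv ha ha').elim
  · exact (push_tree hv ha hT' ha').elim
  · exact (push_cancel hv' ha' ha).elim
  · rw [ha] at ha'
    simp only [Prod.mk.injEq, List.cons.injEq, Sigma.mk.injEq, heq_eq_eq, true_and] at ha'
    obtain ⟨hxy, rfl, hL⟩ := ha'
    obtain rfl := hinj hxy
    dsimp only at hb hb' hL
    rw [hb, hb', hL]
  · rw [ha] at ha'
    simp at ha'
  · exact (push_tree hv' ha' hT ha).elim
  · rw [ha] at ha'
    simp at ha'
  · rw [ha] at ha'
    simp only [Prod.mk.injEq, and_true] at ha'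
    obtain rfl := hinj ha'
    rw [hb, hb']

/-- The bijection between the normal forms of paths from `t e` and those of paths from `t f`, the
initial vertex of `e`, given by prepending `e`. -/
noncomputable def edgeEquiv : NF bar t Gv T αv NTr (t e) ≃ NF bar t Gv T αv NTr (t f) where
  toFun a := (Step.exists hGe S h a).choose
  invFun a := (Step.exists hGe S h.symm a).choose
  left_inv a := Subtype.ext <| Step.unique hGe S h.symm
    (Step.exists hGe S h.symm _).choose_spec (Step.symm hGe S h (Step.exists hGe S h a).choose_spec)
  right_inv a := Subtype.ext <| Step.unique hGe S h
    (Step.exists hGe S h _).choose_spec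
    (Step.symm hGe S h.symm (Step.exists hGe S h.symm a).choose_spec)

lemma edgeEquiv_spec (a : NF bar t Gv T αv NTr (t e)) :
    Step T η hGe πv NTr h a.1 (edgeEquiv hGe S h a).1 :=
  (Step.exists hGe S h a).choose_spec

lemma edgeEquiv_eq {a : NF bar t Gv T αv NTr (t e)} {b : NF bar t Gv T αv NTr (t f)}
    (hs : Step T η hGe πv NTr h a.1 b.1) : edgeEquiv hGe S h a = b :=
  Subtype.ext (Step.unique hGe S h (edgeEquiv_spec hGe S h a) hs)

lemma edgeEquiv_edgeEquiv (a : NF bar t Gv T αv NTr (t e)) :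
    edgeEquiv hGe S h.symm (edgeEquiv hGe S h a) = a :=
  edgeEquiv_eq hGe S h.symm (Step.symm hGe S h (edgeEquiv_spec hGe S h a))

omit S in
variable (bar t Gv T αv NTr) in
/-- The action of the group of `u` on the normal forms of paths from `u` by left multiplication. -/
def vertexPerm (u : V) : Gv u →* Equiv.Perm (NF bar t Gv T αv NTr u) where
  toFun g :=
    { toFun := fun a => ⟨(g * a.1.1, a.1.2), a.2⟩
      invFun := fun a => ⟨(g⁻¹ * a.1.1, a.1.2), a.2⟩
      left_inv := fun a => by ext1; simp
      right_inv := fun a => by ext1; simp }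
  map_one' := by ext1 a; ext1; simp
  map_mul' g g' := by ext1 a; ext1; simp [mul_assoc]

/-- The relation `e η_e(x) = η_ē(x) e` holds for the action on normal forms. -/
lemma edgeEquiv_vertexPerm (x : Ge e) (a : NF bar t Gv T αv NTr (t e)) :
    edgeEquiv hGe S h (vertexPerm bar t Gv T αv NTr _ (η e x) a) =
      vertexPerm bar t Gv T αv NTr _ (η f (theta hGe h x)) (edgeEquiv hGe S h a) := by
  apply edgeEquiv_eq
  have hs := edgeEquiv_spec hGe S h a
  generalize edgeEquiv hGe S h a = b at hs
  obtain ⟨⟨g, L⟩, hL⟩ := a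
  obtain ⟨⟨g', L'⟩, hL'⟩ := b
  rcases hs with ⟨y, w, hv, ha, hb⟩ | ⟨y, w, hv, hb, ha⟩ | ⟨hT, y, ha, hb⟩
  · refine Or.inl ⟨x * y, w, hv, ?_, ?_⟩
    · simp [vertexPerm, show g = _ from ha, mul_assoc]
    · simp only [Prod.mk.injEq] at hb
      simp [vertexPerm, hb.1, hb.2, S.theta_mul]
  · refine Or.inr (Or.inl ⟨x * y, w, hv, ?_, ?_⟩)
    · simp [vertexPerm, show g' = _ from hb, S.theta_mul, mul_assoc]
    · simp only [Prod.mk.injEq] at ha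
      simp [vertexPerm, ha.1, ha.2]
  · refine Or.inr (Or.inr ⟨hT, x * y, ?_, ?_⟩)
    · simp only [Prod.mk.injEq] at ha
      simp [vertexPerm, ha.1, ha.2]
    · simp only [Prod.mk.injEq] at hb
      simp [vertexPerm, hb.1, hb.2, S.theta_mul]

end Action

end GoGNF

namespace GoGNF

/-! ### The fundamental group acts on normal forms -/

section Fund

variable {V E : Type} {bar : E → E} {t : E → V}
  {Gv : V → Type} [instGv : ∀ v, Group (Gv v)]
  {Ge : E → Type} [instGe : ∀ e, Group (Ge e)]
  {T : Set E}
  {η : ∀ e, Ge e →* Gv (t e)} {hGe : ∀ e, Ge (bar e) = Ge e}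
  {αv : V → Type} {πv : ∀ v, αv v → Gv v} {NTr : ∀ e : E, Set (List (αv (t e)))}

variable (bar t Gv Ge T η hGe) in
/-- The quotient map onto the fundamental group. -/
def proj : GoGBase Gv T →* GoGFund bar t Gv Ge T η hGe :=
  QuotientGroup.mk' (Subgroup.normalClosure (gogRels bar t Gv Ge T η hGe))

variable (bar t Gv Ge T η hGe) in
/-- The canonical map from a vertex group to the fundamental group. -/
def iota (v : V) : Gv v →* GoGFund bar t Gv Ge T η hGe :=
  (proj bar t Gv Ge T η hGe).comp (gogVin Gv T v)

open Classical in
variable (bar t Gv Ge T η hGe) in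
/-- The element of the fundamental group given by an edge; it is trivial for a tree edge. -/
noncomputable def ehat (e : E) : GoGFund bar t Gv Ge T η hGe :=
  if h : e ∈ T then 1 else proj bar t Gv Ge T η hGe (gogEin Gv T ⟨e, h⟩)

lemma proj_surjective : Function.Surjective (proj bar t Gv Ge T η hGe) :=
  QuotientGroup.mk'_surjective _

lemma proj_rel {x : GoGBase Gv T} (hx : x ∈ gogRels bar t Gv Ge T η hGe) :
    proj bar t Gv Ge T η hGe x = 1 :=
  (QuotientGroup.eq_one_iff _).2 (Subgroup.subset_normalClosure hx)

lemma iota_eq (v : V) (g : Gv v) :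
    iota bar t Gv Ge T η hGe v g = proj bar t Gv Ge T η hGe (gogVin Gv T v g) := rfl

lemma ehat_tree {e : E} (he : e ∈ T) : ehat bar t Gv Ge T η hGe e = 1 := by
  simp [ehat, he]

lemma ehat_of_not_mem {e : E} (he : e ∉ T) :
    ehat bar t Gv Ge T η hGe e = proj bar t Gv Ge T η hGe (gogEin Gv T ⟨e, he⟩) := by
  simp [ehat, he]

lemma ehat_mul_ehat (hTbar : ∀ e ∈ T, bar e ∈ T) {e f : E} (h : IsPair bar e f) :
    ehat bar t Gv Ge T η hGe f * ehat bar t Gv Ge T η hGe e = 1 := by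
  obtain ⟨rfl, h2⟩ := h
  by_cases he : e ∈ T
  · rw [ehat_tree he, ehat_tree (hTbar e he), one_mul]
  · have hbe : bar e ∉ T := fun hh => he (h2 ▸ hTbar _ hh)
    rw [ehat_of_not_mem hbe, ehat_of_not_mem he, ← map_mul]
    exact proj_rel (Or.inl (Or.inl ⟨e, he, hbe, rfl⟩))

lemma ehat_mul_iota {e f : E} (h : IsPair bar e f) (x : Ge e) :
    ehat bar t Gv Ge T η hGe e * iota bar t Gv Ge T η hGe _ (η e x) =
      iota bar t Gv Ge T η hGe _ (η f (theta hGe h x)) * ehat bar t Gv Ge T η hGe e := by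
  obtain ⟨rfl, h2⟩ := id h
  by_cases he : e ∈ T
  · rw [ehat_tree he, one_mul, mul_one, ← mul_inv_eq_one, iota_eq, iota_eq, ← map_inv, ← map_mul]
    exact proj_rel (Or.inl (Or.inr ⟨e, he, x, rfl⟩))
  · rw [ehat_of_not_mem he, ← mul_inv_eq_iff_eq_mul, ← mul_inv_eq_one, iota_eq, iota_eq,
      ← map_inv, ← map_inv, ← map_mul, ← map_mul, ← map_mul]
    exact proj_rel (Or.inr ⟨e, he, x, rfl⟩)

/-- Induction over the fundamental group: the vertex groups and the edges generate it. -/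
lemma fund_induction {P : GoGFund bar t Gv Ge T η hGe → Prop}
    (hv : ∀ v g, P (iota bar t Gv Ge T η hGe v g)) (he : ∀ e, P (ehat bar t Gv Ge T η hGe e))
    (hmul : ∀ x y, P x → P y → P (x * y)) (hinv : ∀ x, P x → P x⁻¹) (v₀ : V)
    (g : GoGFund bar t Gv Ge T η hGe) : P g := by
  have one : P 1 := by simpa using hv v₀ 1
  have hof : ∀ e : {e : E // e ∉ T}, P (proj bar t Gv Ge T η hGe (gogEin Gv T e)) := by
    rintro ⟨e, hT⟩
    have := he e
    rwa [ehat_of_not_mem hT] at this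
  have mul : ∀ x y, P (proj bar t Gv Ge T η hGe x) → P (proj bar t Gv Ge T η hGe y) →
      P (proj bar t Gv Ge T η hGe (x * y)) := by
    intro x y hx hy
    rw [map_mul]
    exact hmul _ _ hx hy
  obtain ⟨g, rfl⟩ := proj_surjective g
  refine Monoid.Coprod.induction_on (motive := fun g => P (proj bar t Gv Ge T η hGe g)) g ?_ ?_ mul
  · intro g
    induction g using Monoid.CoprodI.induction_on with
    | one =>
      rw [map_one]
      exact (congrArg P (map_one (proj bar t Gv Ge T η hGe))).mpr one
    | of v g => exact hv v g
    | mul x y hx hy =>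
      rw [map_mul]
      exact mul _ _ hx hy
  · intro g
    induction g using FreeGroup.induction_on with
    | C1 =>
      rw [map_one]
      exact (congrArg P (map_one (proj bar t Gv Ge T η hGe))).mpr one
    | of e => exact hof e
    | inv_of e _ =>
      rw [map_inv]
      exact (congrArg P (map_inv (proj bar t Gv Ge T η hGe) _)).mpr (hinv _ (hof e))
    | mul x y hx hy =>
      rw [map_mul]
      exact mul _ _ hx hy

variable (bar t Gv Ge T η hGe πv) in
/-- The value of a list of syllables in the fundamental group. -/
noncomputable def evL (L : List (Syl t αv)) : GoGFund bar t Gv Ge T η hGe :=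
  (L.map fun a => ehat bar t Gv Ge T η hGe a.1 *
    iota bar t Gv Ge T η hGe _ (wordVal (πv (t a.1)) a.2)).prod

variable (bar t Gv Ge T η hGe πv) in
/-- The value in the fundamental group of a normal form for paths from `u`. -/
noncomputable def ev (u : V) (p : Gv u × List (Syl t αv)) : GoGFund bar t Gv Ge T η hGe :=
  iota bar t Gv Ge T η hGe u p.1 * evL bar t Gv Ge T η hGe πv p.2

lemma evL_cons (a : Syl t αv) (L : List (Syl t αv)) :
    evL bar t Gv Ge T η hGe πv (a :: L) = ehat bar t Gv Ge T η hGe a.1 *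
      ev bar t Gv Ge T η hGe πv (t a.1) (wordVal (πv (t a.1)) a.2, L) := by
  simp [evL, ev, mul_assoc]

variable (S : Laws bar t Gv Ge T η hGe αv πv NTr)

include S in
lemma ev_step {e f : E} (h : IsPair bar e f) {a : Gv (t e) × List (Syl t αv)}
    {b : Gv (t f) × List (Syl t αv)} (hs : Step T η hGe πv NTr h a b) :
    ehat bar t Gv Ge T η hGe e * ev bar t Gv Ge T η hGe πv (t e) a =
      ev bar t Gv Ge T η hGe πv (t f) b := by
  have push : ∀ {e f : E} (h : IsPair bar e f) x w (L : List (Syl t αv)),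
      ehat bar t Gv Ge T η hGe e *
        ev bar t Gv Ge T η hGe πv (t e) (η e x * wordVal (πv (t e)) w, L) =
      ev bar t Gv Ge T η hGe πv (t f) (η f (theta hGe h x), ⟨e, w⟩ :: L) := by
    intro e f h x w L
    simp only [ev, evL_cons, map_mul]
    rw [← mul_assoc, ← mul_assoc, ehat_mul_iota h]
    simp only [mul_assoc]
  obtain ⟨g, L⟩ := a
  obtain ⟨g', L'⟩ := b
  rcases hs with ⟨x, w, -, ha, hb⟩ | ⟨x, w, -, hb, ha⟩ | ⟨hT, x, ha, hb⟩
  · obtain rfl : g = _ := ha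
    rw [hb]
    exact push h x w L
  · obtain rfl : g' = _ := hb
    rw [ha, ← mul_right_inj (ehat bar t Gv Ge T η hGe f), ← mul_assoc,
      ehat_mul_ehat S.bar_mem h, one_mul, push h.symm, theta_theta]
  · rw [ha, hb]
    simp only [ev, evL, List.map_nil, List.prod_nil, mul_one]
    rw [ehat_mul_iota h, ehat_tree hT, mul_one]

section Perm

variable {v₀ : V} (φ : ∀ v, NF bar t Gv T αv NTr v₀ ≃ NF bar t Gv T αv NTr v)
  (hφ : ∀ e ∈ T, ∀ f (h : IsPair bar e f) y, edgeEquiv hGe S h (φ (t e) y) = φ (t f) y)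

/-- The action of an edge on the normal forms for the base vertex, given a trivialisation `φ` of
the local system of normal forms over the tree. -/
noncomputable def edgePerm {e f : E} (h : IsPair bar e f) :
    Equiv.Perm (NF bar t Gv T αv NTr v₀) :=
  ((φ (t e)).trans (edgeEquiv hGe S h)).trans (φ (t f)).symm

lemma edgePerm_mul {e f f' : E} (h : IsPair bar e f) (h' : IsPair bar f f') :
    edgePerm S φ h' * edgePerm S φ h = 1 := by
  obtain rfl : f' = e := h'.1.trans h.2.symm
  ext1 y
  simp only [edgePerm, Equiv.Perm.mul_apply, Equiv.trans_apply, Equiv.apply_symm_apply,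
    Equiv.Perm.one_apply]
  rw [edgeEquiv_edgeEquiv hGe S h, Equiv.symm_apply_apply]

omit [∀ e, Group (Ge e)] in
/-- The action of a vertex group on the normal forms for the base vertex. -/
noncomputable def basePerm (v : V) : Gv v →* Equiv.Perm (NF bar t Gv T αv NTr v₀) where
  toFun g := ((φ v).trans (vertexPerm bar t Gv T αv NTr v g)).trans (φ v).symm
  map_one' := by ext1 y; simp
  map_mul' g g' := by ext1 y; simp

lemma edgePerm_mul_basePerm {e f : E} (h : IsPair bar e f) (x : Ge e) :
    edgePerm S φ h * basePerm φ (t e) (η e x) =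
      basePerm φ (t f) (η f (theta hGe h x)) * edgePerm S φ h := by
  ext1 y
  simp [edgePerm, basePerm, edgeEquiv_vertexPerm]

include hφ in
lemma edgePerm_tree {e f : E} (h : IsPair bar e f) (he : e ∈ T) : edgePerm S φ h = 1 := by
  ext1 y
  simp [edgePerm, hφ e he f h]

/-- The action of the free product of which the fundamental group is a quotient. -/
noncomputable def basePi : GoGBase Gv T →* Equiv.Perm (NF bar t Gv T αv NTr v₀) :=
  Monoid.Coprod.lift (Monoid.CoprodI.lift (basePerm φ))
    (FreeGroup.lift fun e => edgePerm S φ (isPair_bar S.bar_bar e.1))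

lemma basePi_vin (v : V) (g : Gv v) : basePi S φ (gogVin Gv T v g) = basePerm φ v g := by
  exact (Monoid.Coprod.lift_apply_inl _ _ _).trans (Monoid.CoprodI.lift_of _ _)

lemma basePi_ein (e : {e : E // e ∉ T}) :
    basePi S φ (gogEin Gv T e) = edgePerm S φ (isPair_bar S.bar_bar e.1) := by
  exact (Monoid.Coprod.lift_apply_inr _ _ _).trans FreeGroup.lift_apply_of

include hφ in
lemma basePi_rels : Subgroup.normalClosure (gogRels bar t Gv Ge T η hGe) ≤ (basePi S φ).ker := by
  apply Subgroup.normalClosure_le_normal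
  rintro x ((⟨e, he, hbe, rfl⟩ | ⟨e, he, g, rfl⟩) | ⟨e, he, g, rfl⟩)
  · rw [SetLike.mem_coe, MonoidHom.mem_ker, map_mul, basePi_ein, basePi_ein]
    exact edgePerm_mul S φ _ _
  · rw [SetLike.mem_coe, MonoidHom.mem_ker, map_mul, map_inv, basePi_vin, basePi_vin,
      mul_inv_eq_one]
    have := edgePerm_mul_basePerm S φ (isPair_bar S.bar_bar e) g
    rwa [edgePerm_tree S φ hφ _ he, one_mul, mul_one] at this
  · rw [SetLike.mem_coe, MonoidHom.mem_ker, map_mul, map_inv, map_mul, map_mul, map_inv,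
      basePi_vin, basePi_vin, basePi_ein, mul_inv_eq_one, mul_inv_eq_iff_eq_mul]
    exact edgePerm_mul_basePerm S φ (isPair_bar S.bar_bar e) g

/-- The action of the fundamental group on the normal forms for the base vertex. -/
noncomputable def rho : GoGFund bar t Gv Ge T η hGe →* Equiv.Perm (NF bar t Gv T αv NTr v₀) :=
  QuotientGroup.lift _ (basePi S φ) (basePi_rels S φ hφ)

lemma rho_iota (v : V) (g : Gv v) :
    rho S φ hφ (iota bar t Gv Ge T η hGe v g) = basePerm φ v g :=
  basePi_vin S φ v g

lemma rho_ehat {e f : E} (h : IsPair bar e f) :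
    rho S φ hφ (ehat bar t Gv Ge T η hGe e) = edgePerm S φ h := by
  obtain ⟨rfl, -⟩ := id h
  by_cases he : e ∈ T
  · rw [ehat_tree he, map_one, edgePerm_tree S φ hφ h he]
  · rw [ehat_of_not_mem he]
    exact basePi_ein S φ ⟨e, he⟩

end Perm

/-- The trivial normal form for paths from `u`. -/
def triv (u : V) : NF bar t Gv T αv NTr u := ⟨(1, []), trivial⟩

include S in
/-- The normal form theorem in group-theoretic form: every element of the fundamental group is the
value of exactly one normal form for the base vertex. -/
theorem ev_bijective (hTtree : ∀ u v : V, ∃! p : List E, (∀ e ∈ p, e ∈ T) ∧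
      IsEdgePath (fun e => t (bar e)) t u p v ∧ List.IsChain (fun e f => f ≠ bar e) p) (v₀ : V) :
    Function.Bijective
      (fun p : NF bar t Gv T αv NTr v₀ => ev bar t Gv Ge T η hGe πv v₀ p.1) := by
  obtain ⟨φ, hφ₀, hφ⟩ := exists_trivialization (NF bar t Gv T αv NTr)
    (fun _ _ h => edgeEquiv hGe S h) (fun _ _ h x => edgeEquiv_edgeEquiv hGe S h x)
    S.bar_bar hTtree v₀
  have hconst : ∀ {α : Type} (F : V → α), (∀ e ∈ T, F (t e) = F (t (bar e))) →
      ∀ u, F u = F v₀ := by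
    intro α F hF u
    obtain ⟨p, hp, -⟩ := hTtree u v₀
    exact tree_const F hF p u hp.1 hp.2.1
  have hev : ∀ v y, ev bar t Gv Ge T η hGe πv v (φ v y).1 = ev bar t Gv Ge T η hGe πv v₀ y.1 := by
    intro v y
    have := hconst (fun v => ev bar t Gv Ge T η hGe πv v (φ v y).1) (fun e he => by
      rw [← hφ e he (bar e) (isPair_bar S.bar_bar e) y, ← ev_step S (isPair_bar S.bar_bar e)
        (edgeEquiv_spec hGe S (isPair_bar S.bar_bar e) (φ (t e) y)), ehat_tree he, one_mul]) v
    simpa [hφ₀] using this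
  have htriv : ∀ v, φ v (triv v₀) = triv v := by
    intro v
    have := hconst (fun v => φ v (triv v₀) = triv v) (fun e he => by
      have h1 : edgeEquiv hGe S (isPair_bar S.bar_bar e) (triv (t e)) = triv (t (bar e)) := by
        apply edgeEquiv_eq
        exact Or.inr (Or.inr ⟨he, 1, by simp [triv], by
          have : theta hGe (isPair_bar S.bar_bar e) (1 : Ge e) = 1 := by
            simpa using S.theta_mul (isPair_bar S.bar_bar e) 1 1
          simp [triv, this]⟩)
      rw [← hφ e he (bar e) (isPair_bar S.bar_bar e), ← h1, EmbeddingLike.apply_eq_iff_eq]) v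
    rw [this, hφ₀]
    rfl
  have hsymm : ∀ v y, ev bar t Gv Ge T η hGe πv v₀ ((φ v).symm y).1 =
      ev bar t Gv Ge T η hGe πv v y.1 := by
    intro v y
    rw [← hev v, Equiv.apply_symm_apply]
  have hequiv : ∀ g y, ev bar t Gv Ge T η hGe πv v₀ (rho S φ hφ g y).1 =
      g * ev bar t Gv Ge T η hGe πv v₀ y.1 := by
    intro g
    induction g using fund_induction (v₀ := v₀) with
    | hv v g =>
      intro y
      rw [rho_iota, ← hev v y]
      refine (hsymm v _).trans ?_
      simp [ev, vertexPerm, mul_assoc]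
    | he e =>
      intro y
      rw [rho_ehat S φ hφ (isPair_bar S.bar_bar e), ← hev (t e) y]
      exact (hsymm _ _).trans (ev_step S _ (edgeEquiv_spec hGe S _ _)).symm
    | hmul x y hx hy =>
      intro z
      rw [map_mul, Equiv.Perm.mul_apply, hx, hy, mul_assoc]
    | hinv x hx =>
      intro z
      rw [eq_inv_mul_iff_mul_eq, ← hx, ← Equiv.Perm.mul_apply, ← map_mul,
        mul_inv_cancel, map_one, Equiv.Perm.one_apply]
  -- a normal form is recovered from its value by acting on the trivial normal form
  have hedge : ∀ e (h : IsPair bar e (bar e)) w L,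
      Valid bar t T αv NTr (t (bar e)) (⟨e, w⟩ :: L) →
      Step T η hGe πv NTr h (wordVal (πv (t e)) w, L) (1, ⟨e, w⟩ :: L) := by
    intro e h w L hv
    have h1 : theta hGe h (1 : Ge e) = 1 := by simpa using S.theta_mul h 1 1
    exact Or.inl ⟨1, w, hv, by simp, by simp [h1]⟩
  have hrec : ∀ (L : List (Syl t αv)) (u : V) (g : Gv u) (hL : Valid bar t T αv NTr u L),
      φ u (rho S φ hφ (ev bar t Gv Ge T η hGe πv u (g, L)) (triv v₀)) = ⟨(g, L), hL⟩ := by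
    intro L
    induction L with
    | nil =>
      intro u g hL
      simp only [ev, evL, List.map_nil, List.prod_nil, mul_one]
      rw [rho_iota]
      simp only [basePerm, MonoidHom.coe_mk, OneHom.coe_mk, Equiv.trans_apply,
        Equiv.apply_symm_apply, htriv]
      simp [vertexPerm, triv]
    | cons a L ih =>
      intro u g hL
      obtain ⟨e, w⟩ := a
      obtain ⟨rfl, hL'⟩ := id hL
      have := ih (t e) (wordVal (πv (t e)) w) hL'.2.2
      simp only [ev] at this ⊢
      rw [evL_cons, map_mul, map_mul, Equiv.Perm.mul_apply, Equiv.Perm.mul_apply, rho_iota,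
        rho_ehat S φ hφ (isPair_bar S.bar_bar e)]
      simp only [basePerm, edgePerm, ev, MonoidHom.coe_mk, OneHom.coe_mk, Equiv.trans_apply,
        Equiv.apply_symm_apply]
      rw [this, edgeEquiv_eq hGe S (isPair_bar S.bar_bar e) (b := ⟨(1, ⟨e, w⟩ :: L), hL⟩)
        (hedge e _ w L hL)]
      simp [vertexPerm]
  constructor
  · rintro ⟨⟨g, L⟩, hL⟩ ⟨⟨g', L'⟩, hL'⟩ hh
    rw [← hrec L v₀ g hL, ← hrec L' v₀ g' hL']
    exact congrArg (fun x => φ v₀ (rho S φ hφ x (triv v₀))) hh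
  · intro g
    exact ⟨rho S φ hφ g (triv v₀), (hequiv g _).trans (by simp [triv, ev, evL])⟩

end Fund

end GoGNF

namespace GoGNF

/-! ### Words and normal forms -/

section Words

variable {V E : Type} {bar : E → E} {t : E → V} {T : Set E} {αv : V → Type}
  {NTr : ∀ e : E, Set (List (αv (t e)))}

variable (t αv) in
/-- The word `e₁t₁⋯e_kt_k` spelled by a list of syllables. -/
def body : List (Syl t αv) → List ((Σ v, αv v) ⊕ E)
  | [] => []
  | a :: L => Sum.inr a.1 :: (gogLift αv (t a.1) a.2 ++ body L)

lemma body_ofFn (k : ℕ) (a : Fin k → Syl t αv) :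
    (List.ofFn fun j => Sum.inr (a j).1 :: gogLift αv (t (a j).1) (a j).2).flatten =
      body t αv (List.ofFn a) := by
  induction k with
  | zero => simp [body]
  | succ k ih => simp [List.ofFn_succ, body, ih]

/-- The recursive condition `Valid` agrees with the indexed conditions defining `Ñ`. -/
lemma valid_ofFn (k : ℕ) : ∀ (u : V) (a : Fin k → Syl t αv),
    Valid bar t T αv NTr u (List.ofFn a) ↔
      (∀ h : 0 < k, t (bar (a ⟨0, h⟩).1) = u) ∧
      (∀ (j : ℕ) (h : j + 1 < k),
        t (a ⟨j, Nat.lt_of_succ_lt h⟩).1 = t (bar (a ⟨j + 1, h⟩).1)) ∧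
      (∀ j : Fin k, (a j).2 ∈ NTr (a j).1) ∧
      (∀ (j : ℕ) (h : j + 1 < k),
        (a ⟨j + 1, h⟩).1 = bar (a ⟨j, Nat.lt_of_succ_lt h⟩).1 →
        (a ⟨j, Nat.lt_of_succ_lt h⟩).2 ≠ []) ∧
      (∀ h : 0 < k, (a ⟨k - 1, Nat.sub_lt h Nat.one_pos⟩).2 ≠ [] ∨
        (a ⟨k - 1, Nat.sub_lt h Nat.one_pos⟩).1 ∉ T) := by
  induction k with
  | zero => intro u a; simp [Valid]
  | succ k ih =>
    intro u a
    rw [List.ofFn_succ, Valid, ih]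
    constructor
    · rintro ⟨h1, h2, h3, i1, i2, i3, i4, i5⟩
      refine ⟨fun _ => h1, ?_, Fin.cases h2 i3, ?_, ?_⟩
      · rintro (_ | j) h
        · exact (i1 (Nat.lt_of_succ_lt_succ h)).symm
        · exact i2 j (Nat.lt_of_succ_lt_succ h)
      · rintro (_ | j) h
        · intro heq hnil
          rcases k with _ | k
          · omega
          · exact (h3 hnil).2 (a 1) (by simp [List.ofFn_succ]) heq
        · exact i4 j (Nat.lt_of_succ_lt_succ h)
      · intro _
        rcases k with _ | k
        · by_cases hw : (a 0).2 = []
          · exact Or.inr ((h3 hw).1 (by simp))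
          · exact Or.inl hw
        · exact i5 (Nat.succ_pos k)
    · rintro ⟨c1, c2, c3, c4, c5⟩
      refine ⟨c1 (Nat.succ_pos k), c3 0, ?_, fun h => (c2 0 (Nat.succ_lt_succ h)).symm,
        fun j h => c2 (j + 1) (Nat.succ_lt_succ h), fun j => c3 j.succ,
        fun j h => c4 (j + 1) (Nat.succ_lt_succ h), ?_⟩
      · intro hw
        rcases k with _ | k
        · exact ⟨fun _ => (c5 Nat.one_pos).resolve_left (fun hn => hn hw), by simp⟩
        · refine ⟨by simp, ?_⟩
          intro b hb heq
          obtain rfl : a 1 = b := by simpa [List.ofFn_succ] using hb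
          exact c4 0 (Nat.succ_lt_succ (Nat.succ_pos k)) heq hw
      · intro h
        rcases k with _ | k
        · omega
        · exact c5 (Nat.succ_pos _)

lemma gogNTilde_eq (v₀ : V) (N₀ : Set (List (αv v₀))) :
    gogNTilde bar t T αv v₀ N₀ NTr = {w | ∃ w₀ ∈ N₀, ∃ L, Valid bar t T αv NTr v₀ L ∧
      w = gogLift αv v₀ w₀ ++ body t αv L} := by
  ext w
  constructor
  · rintro ⟨k, w₀, es, ts, h₀, c1, c2, c3, c4, c5, rfl⟩
    exact ⟨w₀, h₀, List.ofFn fun j => ⟨es j, ts j⟩,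
      (valid_ofFn k v₀ fun j => ⟨es j, ts j⟩).2 ⟨c1, c2, c3, c4, c5⟩,
      congrArg _ (body_ofFn k fun j => ⟨es j, ts j⟩)⟩
  · rintro ⟨w₀, h₀, L, hL, rfl⟩
    rw [← List.ofFn_get L] at hL
    obtain ⟨c1, c2, c3, c4, c5⟩ := (valid_ofFn _ v₀ _).1 hL
    refine ⟨L.length, w₀, fun j => (L.get j).1, fun j => (L.get j).2, h₀, c1, c2, c3, c4, c5, ?_⟩
    rw [body_ofFn L.length L.get, List.ofFn_get]

end Words

/-! ### Evaluation -/

section Eval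

variable {V E : Type} {bar : E → E} {t : E → V}
  {Gv : V → Type} [instGv : ∀ v, Group (Gv v)]
  {Ge : E → Type} [instGe : ∀ e, Group (Ge e)]
  {T : Set E}
  {η : ∀ e, Ge e →* Gv (t e)} {hGe : ∀ e, Ge (bar e) = Ge e}
  {αv : V → Type} {πv : ∀ v, αv v → Gv v} {NTr : ∀ e : E, Set (List (αv (t e)))}

lemma wordVal_append {G α : Type} [Monoid G] (π : α → G) (w w' : List α) :
    wordVal π (w ++ w') = wordVal π w * wordVal π w' := by
  simp [wordVal]

lemma wordVal_singleton {G α : Type} [Monoid G] (π : α → G) (a : α) : wordVal π [a] = π a := by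
  simp [wordVal]

lemma wordVal_gogLift (v : V) (w : List (αv v)) :
    wordVal (gogEvalTilde bar t Gv Ge T η hGe αv πv) (gogLift αv v w) =
      iota bar t Gv Ge T η hGe v (wordVal (πv v) w) := by
  simp only [wordVal, gogLift, List.map_map, map_list_prod]
  rfl

lemma wordVal_body (L : List (Syl t αv)) :
    wordVal (gogEvalTilde bar t Gv Ge T η hGe αv πv) (body t αv L) =
      evL bar t Gv Ge T η hGe πv L := by
  induction L with
  | nil => rfl
  | cons a L ih =>
    rw [evL_cons, ev, ← ih, ← wordVal_gogLift, ← wordVal_append]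
    rfl

lemma wordVal_gogDefl (w : List ((Σ v, αv v) ⊕ E)) :
    wordVal (gogEvalA bar t Gv Ge T η hGe αv πv) (gogDefl T αv w) =
      wordVal (gogEvalTilde bar t Gv Ge T η hGe αv πv) w := by
  induction w with
  | nil => rfl
  | cons x w ih =>
    have h1 : gogDefl T αv (x :: w) = gogDeflLetter T αv x ++ gogDefl T αv w := rfl
    have h2 : wordVal (gogEvalTilde bar t Gv Ge T η hGe αv πv) (x :: w) =
        gogEvalTilde bar t Gv Ge T η hGe αv πv x *
          wordVal (gogEvalTilde bar t Gv Ge T η hGe αv πv) w := by simp [wordVal]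
    rw [h1, h2, wordVal_append, ih]
    congr 1
    rcases x with ⟨v, x⟩ | e
    · exact wordVal_singleton _ _
    · by_cases he : e ∈ T
      · have hd : gogDeflLetter T αv (Sum.inr e) = [] := by simp [gogDeflLetter, he]
        rw [hd]
        exact (ehat_tree he).symm
      · have hd : gogDeflLetter T αv (Sum.inr e) = [Sum.inr ⟨e, he⟩] := by
          simp [gogDeflLetter, he]
        rw [hd, wordVal_singleton]
        exact (ehat_of_not_mem he).symm

/-- The transversals required of the edge groups satisfy the laws the normal form argument
uses. -/
lemma laws_of (hbar : ∀ e, bar (bar e) = e)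
    (hGrpBar : ∀ e, HEq (instGe (bar e)) (instGe e))
    (hηinj : ∀ e, Function.Injective (η e)) (hTbar : ∀ e ∈ T, bar e ∈ T)
    (hNTrpc : ∀ e, PrefixClosed (NTr e))
    (hNTrtr : ∀ e, ∀ g : Gv (t e),
      ∃! w, w ∈ NTr e ∧ wordVal (πv (t e)) w * g⁻¹ ∈ (η e).range) :
    Laws bar t Gv Ge T η hGe αv πv NTr where
  bar_bar := hbar
  bar_mem := hTbar
  theta_mul h x y := theta_mul hGe hGrpBar h x y
  nil_mem e := by
    obtain ⟨w, ⟨hw, -⟩, -⟩ := hNTrtr e 1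
    exact hNTrpc e w hw [] w.nil_prefix
  exists_decomp e g := by
    obtain ⟨w, ⟨hw, x, hx⟩, -⟩ := hNTrtr e g
    exact ⟨x⁻¹, w, hw, by rw [map_inv, hx]; group⟩
  decomp_unique e x x' w w' hw hw' h := by
    obtain rfl : w = w' := (hNTrtr e (η e x * wordVal (πv (t e)) w)).unique
      ⟨hw, x⁻¹, by rw [map_inv]; group⟩ ⟨hw', x'⁻¹, by rw [h, map_inv]; group⟩
    exact ⟨hηinj e (mul_right_cancel h), rfl⟩

end Eval

/-! ### Regularity and prefix-closure -/

section Lang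

variable {V E : Type} {bar : E → E} {t : E → V} {T : Set E} {αv : V → Type}
  {NTr : ∀ e : E, Set (List (αv (t e)))}

/-- The syllables of a normal form as segments over the disjoint union of the vertex alphabets. -/
def segs (L : List (Syl t αv)) : List (E × List (Σ v, αv v)) :=
  L.map fun a => (a.1, a.2.map (Sigma.mk (t a.1)))

lemma lift_body_eq_segWord (v : V) (w : List (αv v)) (L : List (Syl t αv)) :
    gogLift αv v w ++ body t αv L = segWord (w.map (Sigma.mk v)) (segs L) := by
  induction L generalizing v w with
  | nil => simp [gogLift, body, segs, segWord]
  | cons a L ih =>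
    have := ih (t a.1) a.2
    simp only [segs] at this
    simp [gogLift, body, segs, segWord, ← this]

variable (bar t) in
/-- The edges which may follow a segment: the base segment starts at `v₀`, and after the edge `e`
and an empty segment one may not go back along `e`. -/
def segNxt (v₀ : V) : Option E → Bool → E → Prop
  | none, _, e => t (bar e) = v₀
  | some e, b, e' => t (bar e') = t e ∧ (b = true → e' ≠ bar e)

variable (T) in
/-- The segments which may be the last one: a tree edge is not followed by an empty one. -/
def segFin : Option E → Bool → Prop
  | none, _ => True
  | some e, b => b = true → e ∉ T

lemma segGood_some {σ : Option E → Type} (M : ∀ o, DFA (Σ v, αv v) (σ o)) (v₀ : V)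
    (hM : ∀ e, (M (some e)).accepts = List.map (Sigma.mk (t e)) '' NTr e)
    (K : List (E × List (Σ v, αv v))) : ∀ (e : E) (z : List (Σ v, αv v)),
    SegGood M (segNxt bar t v₀) (segFin T) (some e) (M (some e)).start true z K ↔
      ∃ w L, z = w.map (Sigma.mk (t e)) ∧ K = segs L ∧ w ∈ NTr e ∧
        (w = [] → MayFollow bar t T αv e L) ∧ Valid bar t T αv NTr (t e) L := by
  have hacc : ∀ e z, (M (some e)).evalFrom (M (some e)).start z ∈ (M (some e)).accept ↔
      ∃ w ∈ NTr e, w.map (Sigma.mk (t e)) = z := fun e z => Set.ext_iff.1 (hM e) z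
  induction K with
  | nil =>
    intro e z
    simp only [SegGood, hacc, segFin]
    constructor
    · rintro ⟨⟨w, hw, rfl⟩, hf⟩
      exact ⟨w, [], rfl, rfl, hw, fun h => ⟨fun _ => hf (by simp [h]), by simp⟩, trivial⟩
    · rintro ⟨w, L, rfl, hL, hw, hf, -⟩
      obtain rfl : L = [] := by simpa [segs] using hL.symm
      exact ⟨⟨w, hw, rfl⟩, fun h => (hf (by simpa using h)).1 rfl⟩
  | cons c K ih =>
    obtain ⟨e', z'⟩ := c
    intro e z
    simp only [SegGood, hacc, segNxt, ih]
    constructor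
    · rintro ⟨⟨w, hw, rfl⟩, ⟨h1, h2⟩, w', L, rfl, rfl, h3, h4, h5⟩
      refine ⟨w, ⟨e', w'⟩ :: L, rfl, rfl, hw, fun h => ⟨by simp, ?_⟩, h1, h3, h4, h5⟩
      rintro b hb
      obtain rfl : ⟨e', w'⟩ = b := by simpa using hb
      exact h2 (by simp [h])
    · rintro ⟨w, L, rfl, hL, hw, hf, hv⟩
      rcases L with _ | ⟨⟨c, w'⟩, L⟩
      · simp [segs] at hL
      · simp only [segs, List.map_cons, List.cons.injEq, Prod.mk.injEq] at hL
        obtain ⟨⟨rfl, rfl⟩, rfl⟩ := hL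
        exact ⟨⟨w, hw, rfl⟩, ⟨hv.1, fun h => (hf (by simpa using h)).2 ⟨e', w'⟩ (by simp)⟩,
          w', L, rfl, rfl, hv.2.1, hv.2.2.1, hv.2.2.2⟩

lemma regular_gogNTilde [Fintype E] (v₀ : V) {N₀ : Set (List (αv v₀))}
    (hN₀ : IsRegularLang N₀) (hNTr : ∀ e, IsRegularLang (NTr e)) :
    IsRegularLang (gogNTilde bar t T αv v₀ N₀ NTr) := by
  have hmap : ∀ v {N : Set (List (αv v))}, IsRegularLang N →
      IsRegularLang (List.map (Sigma.mk (β := αv) v) '' N) := by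
    intro v N hN
    have := regular_filterMap (fun x => some (Sigma.mk (β := αv) v x)) hN
    simpa using this
  have hreg : ∀ o : Option E, IsRegularLang (match o with
      | none => List.map (Sigma.mk (β := αv) v₀) '' N₀
      | some e => List.map (Sigma.mk (β := αv) (t e)) '' NTr e) := by
    rintro (_ | e)
    exacts [hmap _ hN₀, hmap _ (hNTr e)]
  choose σ hσ M hM using hreg
  have hM₀ : ∀ z, (M none).evalFrom (M none).start z ∈ (M none).accept ↔
      ∃ w ∈ N₀, w.map (Sigma.mk v₀) = z := fun z => Set.ext_iff.1 (hM none) z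
  have hM₁ : ∀ e, (M (some e)).accepts = List.map (Sigma.mk (t e)) '' NTr e := fun e => hM (some e)
  convert regular_segWord M (segNxt bar t v₀) (segFin T) none using 1
  rw [gogNTilde_eq]
  ext z
  constructor
  · rintro ⟨w₀, h₀, L, hL, rfl⟩
    refine ⟨_, _, lift_body_eq_segWord v₀ w₀ L, ?_⟩
    rcases L with _ | ⟨⟨e, w⟩, L⟩
    · exact ⟨(hM₀ _).2 ⟨w₀, h₀, rfl⟩, trivial⟩
    · exact ⟨(hM₀ _).2 ⟨w₀, h₀, rfl⟩, hL.1,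
        (segGood_some M v₀ hM₁ _ e _).2 ⟨w, L, rfl, rfl, hL.2⟩⟩
  · rintro ⟨y, K, rfl, hg⟩
    rcases K with _ | ⟨⟨e, z⟩, K⟩
    · obtain ⟨w₀, h₀, rfl⟩ := (hM₀ _).1 hg.1
      exact ⟨w₀, h₀, [], trivial, (lift_body_eq_segWord v₀ w₀ []).symm⟩
    · obtain ⟨w₀, h₀, rfl⟩ := (hM₀ _).1 hg.1
      obtain ⟨w, L, rfl, rfl, h⟩ := (segGood_some M v₀ hM₁ _ e _).1 hg.2.2
      exact ⟨w₀, h₀, ⟨e, w⟩ :: L, ⟨hg.2.1, h⟩, (lift_body_eq_segWord v₀ w₀ (⟨e, w⟩ :: L)).symm⟩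

open Classical in
lemma gogDefl_eq_filterMap (w : List ((Σ v, αv v) ⊕ E)) :
    gogDefl T αv w = w.filterMap (fun x => match x with
      | Sum.inl x => some (Sum.inl x)
      | Sum.inr e => if h : e ∈ T then none else some (Sum.inr ⟨e, h⟩)) := by
  induction w with
  | nil => rfl
  | cons x w ih =>
    have h1 : gogDefl T αv (x :: w) = gogDeflLetter T αv x ++ gogDefl T αv w := rfl
    rw [h1, ih, List.filterMap_cons]
    rcases x with x | e
    · simp [gogDeflLetter]
    · by_cases he : e ∈ T <;> simp [gogDeflLetter, he]

lemma regular_gogDefl {L : Set (List ((Σ v, αv v) ⊕ E))} (hL : IsRegularLang L) :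
    IsRegularLang (gogDefl T αv '' L) := by
  classical
  rw [show gogDefl T αv = _ from funext gogDefl_eq_filterMap]
  exact regular_filterMap _ hL

lemma gogDefl_append (w w' : List ((Σ v, αv v) ⊕ E)) :
    gogDefl T αv (w ++ w') = gogDefl T αv w ++ gogDefl T αv w' := by
  simp [gogDefl]

lemma prefix_append_cases {α : Type} {p x y : List α} (h : p <+: x ++ y) :
    p <+: x ∨ ∃ q, q <+: y ∧ p = x ++ q := by
  rcases List.prefix_or_prefix_of_prefix h (List.prefix_append x y) with hp | ⟨q, rfl⟩
  · exact Or.inl hp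
  · exact Or.inr ⟨q, (List.prefix_append_right_inj x).1 h, rfl⟩

lemma gogDefl_gogLift (v : V) (w : List (αv v)) :
    gogDefl T αv (gogLift αv v w) = w.map fun x => Sum.inl ⟨v, x⟩ := by
  induction w with
  | nil => rfl
  | cons x w ih =>
    simp only [gogDefl, gogLift, List.map_cons, List.flatMap_cons, gogDeflLetter] at ih ⊢
    rw [ih]
    rfl

lemma prefix_gogDefl_gogLift {v : V} {w : List (αv v)} {p : List ((Σ v, αv v) ⊕ {e : E // e ∉ T})}
    (h : p <+: gogDefl T αv (gogLift αv v w)) :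
    ∃ w', w' <+: w ∧ p = gogDefl T αv (gogLift αv v w') := by
  rw [gogDefl_gogLift] at h
  obtain ⟨w', hw', rfl⟩ := List.prefix_map_iff.1 h
  exact ⟨w', hw', (gogDefl_gogLift v w').symm⟩

/-- Tails of normal forms are prefix-closed after deflation. A prefix of a deflated word lifts to a
prefix of the original word, and trailing tree edges of the latter can be dropped. -/
lemma prefix_body (hNTrpc : ∀ e, PrefixClosed (NTr e)) (L : List (Syl t αv)) :
    ∀ (u : V) (p : List ((Σ v, αv v) ⊕ {e : E // e ∉ T})), Valid bar t T αv NTr u L →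
      p <+: gogDefl T αv (body t αv L) →
      ∃ L', Valid bar t T αv NTr u L' ∧ p = gogDefl T αv (body t αv L') ∧
        ∀ a ∈ L'.head?, ∃ b ∈ L.head?, a.1 = b.1 := by
  induction L with
  | nil =>
    intro u p _ hp
    exact ⟨[], trivial, List.prefix_nil.1 hp, by simp⟩
  | cons c L ih =>
    obtain ⟨e, w⟩ := c
    intro u p hv hp
    have hd : ∀ w L, gogDefl T αv (body t αv (⟨e, w⟩ :: L)) = gogDeflLetter T αv (Sum.inr e) ++
        (gogDefl T αv (gogLift αv (t e) w) ++ gogDefl T αv (body t αv L)) := by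
      intro w L
      rw [← gogDefl_append]
      rfl
    have hd_tree : e ∈ T → gogDeflLetter T αv (Sum.inr e) = [] := fun he => by
      simp [gogDeflLetter, he]
    -- the normal form `e w' L'`, or the empty one if it would end in the tree edge `e`
    have main : ∀ w' L', w' ∈ NTr e → Valid bar t T αv NTr (t e) L' →
        (w' = [] → ∀ a ∈ L'.head?, a.1 ≠ bar e) →
        p = gogDefl T αv (body t αv (⟨e, w'⟩ :: L')) →
        ∃ L', Valid bar t T αv NTr u L' ∧ p = gogDefl T αv (body t αv L') ∧
          ∀ a ∈ L'.head?, ∃ b ∈ (⟨e, w⟩ :: L : List (Syl t αv)).head?, a.1 = b.1 := by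
      intro w' L' hw' hL' hh hp
      by_cases hc : w' = [] ∧ L' = [] ∧ e ∈ T
      · obtain ⟨rfl, rfl, he⟩ := hc
        refine ⟨[], trivial, ?_, by simp⟩
        rw [hp, hd, hd_tree he]
        rfl
      · exact ⟨⟨e, w'⟩ :: L', ⟨hv.1, hw', fun h => ⟨fun h' he => hc ⟨h, h', he⟩, hh h⟩, hL'⟩, hp,
          by simp⟩
    rw [hd] at hp
    rcases prefix_append_cases hp with hp | ⟨q, hq, rfl⟩
    · by_cases hpn : p = []
      · exact ⟨[], trivial, by simp [hpn, body, gogDefl], by simp⟩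
      · have he : e ∉ T := fun he => hpn (by rw [hd_tree he] at hp; exact List.prefix_nil.1 hp)
        have hp' : p = gogDeflLetter T αv (Sum.inr e) := by
          have h1 : (gogDeflLetter T αv (Sum.inr e)).length = 1 := by simp [gogDeflLetter, he]
          refine hp.eq_of_length_le ?_
          rw [h1]
          exact List.length_pos_iff.2 hpn
        refine main [] [] (hNTrpc e w hv.2.1 [] w.nil_prefix) trivial (by simp) ?_
        rw [hd, hp']
        simp [gogDefl, gogLift, body]
    rcases prefix_append_cases hq with hq | ⟨r, hr, rfl⟩
    · obtain ⟨w', hw', rfl⟩ := prefix_gogDefl_gogLift hq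
      refine main w' [] (hNTrpc e w hv.2.1 w' hw') trivial (by simp) ?_
      rw [hd]
      simp [gogDefl, body]
    · obtain ⟨L', hL', rfl, hh⟩ := ih (t e) r hv.2.2.2 hr
      refine main w L' hv.2.1 hL' ?_ (hd w L').symm
      intro hw a ha
      obtain ⟨b, hb, hab⟩ := hh a ha
      rw [hab]
      exact (hv.2.2.1 hw).2 b hb

lemma prefixClosed_gogDefl {v₀ : V} {N₀ : Set (List (αv v₀))} (hN₀ : PrefixClosed N₀)
    (hNTrpc : ∀ e, PrefixClosed (NTr e)) :
    PrefixClosed (gogDefl T αv '' gogNTilde bar t T αv v₀ N₀ NTr) := by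
  rw [gogNTilde_eq]
  rintro _ ⟨_, ⟨w₀, h₀, L, hL, rfl⟩, rfl⟩ p hp
  rw [gogDefl_append] at hp
  rcases prefix_append_cases hp with hp | ⟨q, hq, rfl⟩
  · obtain ⟨w', hw', rfl⟩ := prefix_gogDefl_gogLift hp
    exact ⟨_, ⟨w', hN₀ w₀ h₀ w' hw', [], trivial, rfl⟩, by simp [body]⟩
  · obtain ⟨L', hL', rfl, -⟩ := prefix_body hNTrpc L v₀ q hL hq
    exact ⟨_, ⟨w₀, h₀, L', hL', rfl⟩, gogDefl_append _ _⟩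

end Lang

end GoGNF

/-- **Proposition (normal forms for fundamental groups of graphs of groups).**
Given regular prefix-closed normal forms `N₀` for the base vertex group and regular
prefix-closed coset transversal languages `NTr e` for the images of the edge groups,
the language `Ñ` is a regular set of normal forms for `π₁(𝒢)` over `Ã`, and its
deflation `N = defl(Ñ)` is a regular prefix-closed set of normal forms for `π₁(𝒢)`
over `A`. -/
theorem graph_of_groups_normal_forms
    {V E : Type} [Fintype V] [Fintype E]
    (bar : E → E) (t : E → V)
    (Gv : V → Type) [instGv : ∀ v, Group (Gv v)]
    (Ge : E → Type) [instGe : ∀ e, Group (Ge e)]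
    (T : Set E)
    (η : ∀ e, Ge e →* Gv (t e)) (hGe : ∀ e, Ge (bar e) = Ge e)
    (hbar : ∀ e, bar (bar e) = e) (hbarne : ∀ e, bar e ≠ e)
    (hGrpBar : ∀ e, HEq (instGe (bar e)) (instGe e))
    (hηinj : ∀ e, Function.Injective (η e))
    (hconn : ∀ u v : V, ∃ p : List E, IsEdgePath (fun e => t (bar e)) t u p v)
    (hTbar : ∀ e ∈ T, bar e ∈ T)
    (hTtree : ∀ u v : V, ∃! p : List E, (∀ e ∈ p, e ∈ T) ∧
      IsEdgePath (fun e => t (bar e)) t u p v ∧ List.Chain' (fun e f => f ≠ bar e) p)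
    (v₀ : V)
    (αv : V → Type) [∀ v, Fintype (αv v)]
    (πv : ∀ v, αv v → Gv v) (invv : ∀ v, αv v → αv v)
    (hgenv : ∀ v, IsInvGenSet (Gv v) (πv v) (invv v))
    (N₀ : Set (List (αv v₀)))
    (hN₀reg : IsRegularLang N₀) (hN₀pc : PrefixClosed N₀)
    (hN₀nf : ∀ g : Gv v₀, ∃! w, w ∈ N₀ ∧ wordVal (πv v₀) w = g)
    (NTr : ∀ e : E, Set (List (αv (t e))))
    (hNTrreg : ∀ e, IsRegularLang (NTr e)) (hNTrpc : ∀ e, PrefixClosed (NTr e))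
    (hNTrtr : ∀ e, ∀ g : Gv (t e),
      ∃! w, w ∈ NTr e ∧ wordVal (πv (t e)) w * g⁻¹ ∈ (η e).range) :
    (IsRegularLang (gogNTilde bar t T αv v₀ N₀ NTr) ∧
      ∀ g : GoGFund bar t Gv Ge T η hGe,
        ∃! w, w ∈ gogNTilde bar t T αv v₀ N₀ NTr ∧
          wordVal (gogEvalTilde bar t Gv Ge T η hGe αv πv) w = g) ∧
    (IsRegularLang (gogDefl T αv '' gogNTilde bar t T αv v₀ N₀ NTr) ∧
      PrefixClosed (gogDefl T αv '' gogNTilde bar t T αv v₀ N₀ NTr) ∧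
      ∀ g : GoGFund bar t Gv Ge T η hGe,
        ∃! w, w ∈ gogDefl T αv '' gogNTilde bar t T αv v₀ N₀ NTr ∧
          wordVal (gogEvalA bar t Gv Ge T η hGe αv πv) w = g) := by

  have S : GoGNF.Laws bar t Gv Ge T η hGe αv πv NTr :=
    GoGNF.laws_of hbar hGrpBar hηinj hTbar hNTrpc hNTrtr
  have hreg : IsRegularLang (gogNTilde bar t T αv v₀ N₀ NTr) :=
    GoGNF.regular_gogNTilde v₀ hN₀reg hNTrreg
  have hbij : ∀ g : GoGFund bar t Gv Ge T η hGe,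
      ∃! w, w ∈ gogNTilde bar t T αv v₀ N₀ NTr ∧
        wordVal (gogEvalTilde bar t Gv Ge T η hGe αv πv) w = g := by
    obtain ⟨hinj, hsurj⟩ := GoGNF.ev_bijective S hTtree v₀
    have hval : ∀ w₀ L, wordVal (gogEvalTilde bar t Gv Ge T η hGe αv πv)
        (gogLift αv v₀ w₀ ++ GoGNF.body t αv L) =
          GoGNF.ev bar t Gv Ge T η hGe πv v₀ (wordVal (πv v₀) w₀, L) := by
      intro w₀ L
      rw [GoGNF.wordVal_append, GoGNF.wordVal_gogLift, GoGNF.wordVal_body, GoGNF.ev]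
    rw [GoGNF.gogNTilde_eq]
    intro g
    obtain ⟨⟨⟨x, L⟩, hL⟩, hg⟩ := hsurj g
    obtain ⟨w₀, ⟨h₀, rfl⟩, -⟩ := hN₀nf x
    refine ⟨_, ⟨⟨w₀, h₀, L, hL, rfl⟩, (hval w₀ L).trans hg⟩, ?_⟩
    rintro _ ⟨⟨w₀', h₀', L', hL', rfl⟩, hg'⟩
    have heq := hinj (a₁ := ⟨(wordVal (πv v₀) w₀', L'), hL'⟩)
      (a₂ := ⟨(wordVal (πv v₀) w₀, L), hL⟩) (((hval w₀' L').symm.trans hg').trans hg.symm)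
    simp only [Subtype.mk.injEq, Prod.mk.injEq] at heq
    obtain ⟨hw, rfl⟩ := heq
    rw [(hN₀nf _).unique ⟨h₀', hw⟩ ⟨h₀, rfl⟩]
  refine ⟨⟨hreg, hbij⟩, GoGNF.regular_gogDefl hreg, GoGNF.prefixClosed_gogDefl hN₀pc hNTrpc, ?_⟩
  intro g
  obtain ⟨w, ⟨hw, hg⟩, huniq⟩ := hbij g
  refine ⟨gogDefl T αv w, ⟨⟨w, hw, rfl⟩, (GoGNF.wordVal_gogDefl w).trans hg⟩, ?_⟩
  rintro _ ⟨⟨w', hw', rfl⟩, hg'⟩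
  rw [huniq w' ⟨hw', (GoGNF.wordVal_gogDefl w').symm.trans hg'⟩]
end

section
/- With notation as below, let ỹ = w₀e₁t₁e₂t₂⋯e_k t_k be an element of Ñ (with k ≥ 0, i(e₁) = v₀, w₀ ∈ N₀, each e_j ∈ E, t(e_j) = i(e_{j+1}), t_j ∈ N_{Tr,e_j}), let u ∈ V, let w ∈ A_u*, and let f₁⋯f_m (m ≥ 0, each f_j a directed edge of the spanning tree T̂) be the unique reduced edge path in T̂ from the terminal vertex of ỹ (namely t(e_k), or v₀ if k = 0) to u. Then the unique word of Ñ representing the same element of π₁(𝒢) as ỹw equals trim(w₀′ e₁x₁e₂⋯e_k x_k f₁w₁f₂⋯f_m w_m) for some words w₀′ ∈ N₀, xᵢ ∈ N_{Tr,eᵢ} (1 ≤ i ≤ k), and w_j ∈ N_{Tr,f_j} (1 ≤ j ≤ m). -/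
section Helpers

variable {V E : Type} {bar : E → E} {t : E → V}
  {Gv : V → Type} [instGv : ∀ v, Group (Gv v)]
  {Ge : E → Type} [instGe : ∀ e, Group (Ge e)]
  {T : Set E}
  {η : ∀ e, Ge e →* Gv (t e)} {hGe : ∀ e, Ge (bar e) = Ge e}
  {αv : V → Type}
  {πv : ∀ v, αv v → Gv v}

/-! ### Words as lists of syllables -/

/-- The word `e₁t₁⋯e_kt_k` over `Ã` spelled by a list of syllables `(e_j, t_j)`. -/
def sylWord (t : E → V) (αv : V → Type) (l : List (Σ e : E, List (αv (t e)))) :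
    List ((Σ v : V, αv v) ⊕ E) :=
  l.flatMap (fun s => Sum.inr s.1 :: gogLift αv (t s.1) s.2)

/-- Two consecutive syllables `(e, x)`, `(e', x')` form no pinch: if `e' = ē`, then `x` is
not the empty word. -/
def NoPinch (bar : E → E) (t : E → V) (αv : V → Type)
    (s s' : Σ e : E, List (αv (t e))) : Prop :=
  s'.1 = bar s.1 → s.2 ≠ []

lemma sylWord_nil : sylWord t αv [] = [] := rfl

lemma sylWord_cons (s : Σ e : E, List (αv (t e))) (l) :
    sylWord t αv (s :: l) = Sum.inr s.1 :: (gogLift αv (t s.1) s.2 ++ sylWord t αv l) := by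
  simp [sylWord]

lemma sylWord_append (l l' : List (Σ e : E, List (αv (t e)))) :
    sylWord t αv (l ++ l') = sylWord t αv l ++ sylWord t αv l' := by
  simp [sylWord]

lemma sylWord_ofFn {k : ℕ} (es : Fin k → E) (ts : (j : Fin k) → List (αv (t (es j)))) :
    (List.ofFn (fun j : Fin k =>
      (Sum.inr (es j) : (Σ v : V, αv v) ⊕ E) :: gogLift αv (t (es j)) (ts j))).flatten =
    sylWord t αv (List.ofFn fun j => (⟨es j, ts j⟩ : Σ e : E, List (αv (t e)))) := by
  simp [sylWord, List.flatMap, List.map_ofFn, Function.comp_def]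

/-- A list of syllables with prescribed edges comes from a family of words indexed by these
edges. -/
lemma exists_ofFn_of_map_fst {k : ℕ} (es : Fin k → E) (l : List (Σ e : E, List (αv (t e))))
    (h : l.map Sigma.fst = List.ofFn es) :
    ∃ xs : (j : Fin k) → List (αv (t (es j))), l = List.ofFn fun j => ⟨es j, xs j⟩ := by
  have hk : l.length = k := by simpa using congrArg List.length h
  subst hk
  have h2 : es = fun j => (l.get j).1 := by
    apply List.ofFn_injective
    rw [← h]
    conv_lhs => rw [← List.ofFn_get l]
    rw [List.map_ofFn]
    rfl
  subst h2
  exact ⟨fun j => (l.get j).2, (List.ofFn_get l).symm⟩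

/-- Edge letters separate the syllables, so that a word over `Ã` has at most one
decomposition into an initial vertex word and syllables. -/
lemma lift_sylWord_inj (l l' : List (Σ e : E, List (αv (t e)))) (v : V)
    (w w' : List (αv v))
    (h : gogLift αv v w ++ sylWord t αv l = gogLift αv v w' ++ sylWord t αv l') :
    w = w' ∧ l = l' := by
  induction l generalizing l' v w w' with
  | nil =>
    induction w generalizing w' with
    | nil =>
      cases w' <;> cases l' <;> simp_all [gogLift, sylWord]
    | cons a w ih =>
      cases w' with
      | nil => cases l' <;> simp_all [gogLift, sylWord]
      | cons b w' =>
        simp only [gogLift, List.map_cons, List.cons_append, List.cons.injEq, Sum.inl.injEq,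
          Sigma.mk.injEq, heq_eq_eq, true_and] at h
        obtain ⟨h1, h2⟩ := ih w' h.2
        exact ⟨by rw [h.1, h1], h2⟩
  | cons s l ihl =>
    induction w generalizing w' with
    | nil =>
      cases w' with
      | nil =>
        cases l' with
        | nil => simp_all [gogLift, sylWord]
        | cons s' l' =>
          obtain ⟨e, x⟩ := s
          obtain ⟨e', x'⟩ := s'
          rw [sylWord_cons, sylWord_cons] at h
          simp only [gogLift, List.map_nil, List.nil_append, List.cons.injEq,
            Sum.inr.injEq] at h
          obtain ⟨h1, h2⟩ := h
          subst h1
          obtain ⟨h3, h4⟩ := ihl l' (t e) x x' h2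
          exact ⟨rfl, by rw [h3, h4]⟩
      | cons b w' => simp [gogLift, sylWord_cons] at h
    | cons a w ih =>
      cases w' with
      | nil => cases l' <;> simp_all [gogLift, sylWord]
      | cons b w' =>
        simp only [gogLift, List.map_cons, List.cons_append, List.cons.injEq, Sum.inl.injEq,
          Sigma.mk.injEq, heq_eq_eq, true_and] at h
        obtain ⟨h1, h2⟩ := ih w' h.2
        exact ⟨by rw [h.1, h1], h2⟩

/-! ### Edge paths -/

lemma IsEdgePath.append {ι τ : E → V} {p q : List E} {a b c : V}
    (hp : IsEdgePath ι τ a p b) (hq : IsEdgePath ι τ b q c) :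
    IsEdgePath ι τ a (p ++ q) c := by
  induction p generalizing a with
  | nil => cases hp; exact hq
  | cons e p ih => exact ⟨hp.1, ih hp.2⟩

lemma IsEdgePath.isChain {ι τ : E → V} {p : List E} {a b : V}
    (hp : IsEdgePath ι τ a p b) :
    (∀ e ∈ p.head?, ι e = a) ∧ p.IsChain (fun e e' => τ e = ι e') := by
  induction p generalizing a with
  | nil => simp
  | cons e p ih =>
    obtain ⟨h1, h2⟩ := ih hp.2
    refine ⟨by simpa using hp.1, ?_⟩
    rw [List.isChain_cons]
    exact ⟨fun e' he' => (h1 e' he').symm, h2⟩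

lemma IsEdgePath.of_isChain {ι τ : E → V} {p : List E} {a b : V}
    (h0 : p = [] → b = a) (hl : ∀ e ∈ p.getLast?, b = τ e)
    (hh : ∀ e ∈ p.head?, ι e = a) (hc : p.IsChain (fun e e' => τ e = ι e')) :
    IsEdgePath ι τ a p b := by
  induction p generalizing a with
  | nil => exact (h0 rfl).symm
  | cons e p ih =>
    rw [List.isChain_cons] at hc
    refine ⟨hh e (by simp), ih ?_ ?_ (fun e' he' => (hc.1 e' he').symm) hc.2⟩
    · rintro rfl
      exact hl e (by simp)
    · intro e' hlast
      apply hl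
      cases p with
      | nil => simp at hlast
      | cons a p => simpa [List.getLast?_cons_cons] using hlast

/-! ### The language `Ñ` in terms of syllables -/

lemma forall_mem_head?_ofFn {β : Type*} {k : ℕ} (g : Fin k → β) (P : β → Prop) :
    (∀ s ∈ (List.ofFn g).head?, P s) ↔ ∀ h : 0 < k, P (g ⟨0, h⟩) := by
  cases k with
  | zero => simp
  | succ k => simp [List.ofFn_succ]

lemma forall_mem_getLast?_ofFn {β : Type*} {k : ℕ} (g : Fin k → β) (P : β → Prop) :
    (∀ s ∈ (List.ofFn g).getLast?, P s) ↔
      ∀ h : 0 < k, P (g ⟨k - 1, Nat.sub_lt h Nat.one_pos⟩) := by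
  cases k with
  | zero => simp
  | succ k =>
    rw [List.ofFn_succ']
    simp [Fin.last]

lemma isChain_ofFn_iff {β : Type*} {k : ℕ} (g : Fin k → β) (R : β → β → Prop) :
    (List.ofFn g).IsChain R ↔
      ∀ (j : ℕ) (h : j + 1 < k), R (g ⟨j, Nat.lt_of_succ_lt h⟩) (g ⟨j + 1, h⟩) := by
  rw [List.isChain_iff_getElem]
  simp

lemma mem_gogNTilde_iff {v₀ : V} {N₀ : Set (List (αv v₀))}
    {NTr : ∀ e : E, Set (List (αv (t e)))} {w : List ((Σ v : V, αv v) ⊕ E)} :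
    w ∈ gogNTilde bar t T αv v₀ N₀ NTr ↔
      ∃ w₀ ∈ N₀, ∃ l : List (Σ e : E, List (αv (t e))),
        (∀ s ∈ l.head?, t (bar s.1) = v₀) ∧
        l.IsChain (fun s s' => t s.1 = t (bar s'.1)) ∧
        (∀ s ∈ l, s.2 ∈ NTr s.1) ∧
        l.IsChain (NoPinch bar t αv) ∧
        (∀ s ∈ l.getLast?, s.2 ≠ [] ∨ s.1 ∉ T) ∧
        w = gogLift αv v₀ w₀ ++ sylWord t αv l := by
  constructor
  · rintro ⟨k, w₀, es, ts, h0, h1, h2, h3, h4, h5, rfl⟩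
    refine ⟨w₀, h0, List.ofFn fun j => ⟨es j, ts j⟩, ?_, ?_, ?_, ?_, ?_, ?_⟩
    · rw [forall_mem_head?_ofFn]; exact h1
    · rw [isChain_ofFn_iff]; exact h2
    · rw [List.forall_mem_ofFn_iff]; exact h3
    · rw [isChain_ofFn_iff]; exact h4
    · rw [forall_mem_getLast?_ofFn]; exact h5
    · rw [sylWord_ofFn]
  · rintro ⟨w₀, h0, l, h1, h2, h3, h4, h5, rfl⟩
    obtain ⟨k, g, rfl⟩ : ∃ (k : ℕ) (g : Fin k → Σ e : E, List (αv (t e))), l = List.ofFn g :=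
      ⟨l.length, l.get, (List.ofFn_get l).symm⟩
    rw [forall_mem_head?_ofFn] at h1
    rw [isChain_ofFn_iff] at h2 h4
    rw [List.forall_mem_ofFn_iff] at h3
    rw [forall_mem_getLast?_ofFn] at h5
    refine ⟨k, w₀, fun j => (g j).1, fun j => (g j).2, h0, h1, h2, h3, h4, h5, ?_⟩
    rw [sylWord_ofFn]

/-! ### Trimming -/

lemma gogTrim_append_of_mem {e : E} (he : e ∈ T) (w : List ((Σ v : V, αv v) ⊕ E)) :
    gogTrim T αv (w ++ [Sum.inr e]) = gogTrim T αv w := by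
  simp [gogTrim, he]

lemma gogTrim_append_of_notMem {a : (Σ v : V, αv v) ⊕ E}
    (ha : ¬ ∃ e : E, a = Sum.inr e ∧ e ∈ T) (w : List ((Σ v : V, αv v) ⊕ E)) :
    gogTrim T αv (w ++ [a]) = w ++ [a] := by
  rw [gogTrim, List.reverse_append, List.reverse_singleton, List.singleton_append,
    List.dropWhile_cons_of_neg (by simpa using ha)]
  simp

lemma gogTrim_append_lift (w : List ((Σ v : V, αv v) ⊕ E)) {v : V} {x : List (αv v)}
    (hx : x ≠ []) : gogTrim T αv (w ++ gogLift αv v x) = w ++ gogLift αv v x := by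
  induction x using List.reverseRecOn with
  | nil => exact absurd rfl hx
  | append_singleton x a _ =>
    simp only [gogLift, List.map_append, List.map_cons, List.map_nil, ← List.append_assoc]
    exact gogTrim_append_of_notMem (by simp) _

/-- Trimming deletes the maximal suffix of syllables of the form `(e, ε)` with `e` a tree
edge. -/
lemma exists_gogTrim_eq {v : V} (w₀ : List (αv v)) (l : List (Σ e : E, List (αv (t e)))) :
    ∃ l', l' <+: l ∧ (∀ s ∈ l'.getLast?, s.2 ≠ [] ∨ s.1 ∉ T) ∧
      gogTrim T αv (gogLift αv v w₀ ++ sylWord t αv l) =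
        gogLift αv v w₀ ++ sylWord t αv l' := by
  induction l using List.reverseRecOn with
  | nil =>
    refine ⟨[], List.prefix_rfl, by simp, ?_⟩
    by_cases h : w₀ = []
    · subst h; simp [gogLift, sylWord, gogTrim]
    · simpa [sylWord_nil] using gogTrim_append_lift (T := T) [] h
  | append_singleton l s ih =>
    obtain ⟨e, x⟩ := s
    have key : gogLift αv v w₀ ++ sylWord t αv (l ++ [⟨e, x⟩]) =
        ((gogLift αv v w₀ ++ sylWord t αv l) ++ [Sum.inr e]) ++ gogLift αv (t e) x := by
      simp [sylWord_append, sylWord_cons, sylWord_nil]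
    by_cases hx : x = []
    · by_cases he : e ∈ T
      · subst hx
        obtain ⟨l', h1, h2, h3⟩ := ih
        refine ⟨l', h1.trans (List.prefix_append _ _), h2, ?_⟩
        rw [key, ← h3, show gogLift (E := E) αv (t e) [] = [] from rfl, List.append_nil]
        exact gogTrim_append_of_mem he _
      · refine ⟨l ++ [⟨e, x⟩], List.prefix_rfl, by simp [he], ?_⟩
        subst hx
        rw [key, show gogLift (E := E) αv (t e) [] = [] from rfl, List.append_nil]
        exact gogTrim_append_of_notMem (by simpa using he) _
    · refine ⟨l ++ [⟨e, x⟩], List.prefix_rfl, by simp [hx], ?_⟩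
      rw [key]
      exact gogTrim_append_lift _ hx

/-! ### Evaluation in the fundamental group -/

lemma wordVal_append {G : Type} [Monoid G] {α : Type} (π : α → G) (w w' : List α) :
    wordVal π (w ++ w') = wordVal π w * wordVal π w' := by
  simp [wordVal]

lemma wordVal_cons {G : Type} [Monoid G] {α : Type} (π : α → G) (a : α) (w : List α) :
    wordVal π (a :: w) = π a * wordVal π w := by
  simp [wordVal]

variable (bar t Gv Ge T η hGe αv πv)

/-- The canonical map of a vertex group into the fundamental group. -/
def vertexHom (v : V) : Gv v →* GoGFund bar t Gv Ge T η hGe :=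
  (QuotientGroup.mk' (Subgroup.normalClosure (gogRels bar t Gv Ge T η hGe))).comp
    (gogVin Gv T v)

variable {bar t Gv Ge T η hGe αv πv}

lemma wordVal_gogLift (v : V) (w : List (αv v)) :
    wordVal (gogEvalTilde bar t Gv Ge T η hGe αv πv) (gogLift αv v w) =
      vertexHom bar t Gv Ge T η hGe v (wordVal (πv v) w) := by
  induction w with
  | nil => simp [wordVal, gogLift]
  | cons a w ih =>
    have : gogLift (E := E) αv v (a :: w) = Sum.inl ⟨v, a⟩ :: gogLift αv v w := rfl
    rw [this, wordVal_cons, wordVal_cons, map_mul, ih]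
    rfl

lemma gogEvalTilde_of_mem {e : E} (he : e ∈ T) :
    gogEvalTilde bar t Gv Ge T η hGe αv πv (Sum.inr e) = 1 := by
  simp [gogEvalTilde, he]

/-- An edge letter conjugates the image of `η_e` to the image of `η_ē`, for tree edges as well
as for the other ones. -/
lemma gogEvalTilde_mul_vertexHom (e : E) (g : Ge e) :
    gogEvalTilde bar t Gv Ge T η hGe αv πv (Sum.inr e) *
        vertexHom bar t Gv Ge T η hGe (t e) (η e g) =
      vertexHom bar t Gv Ge T η hGe (t (bar e)) (η (bar e) (cast (hGe e).symm g)) *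
        gogEvalTilde bar t Gv Ge T η hGe αv πv (Sum.inr e) := by
  let q := QuotientGroup.mk' (Subgroup.normalClosure (gogRels bar t Gv Ge T η hGe))
  have hq : ∀ x ∈ gogRels bar t Gv Ge T η hGe, q x = 1 := fun x hx =>
    (QuotientGroup.eq_one_iff x).2 (Subgroup.subset_normalClosure hx)
  by_cases he : e ∈ T
  · have h := hq _ (Or.inl (Or.inr ⟨e, he, g, rfl⟩))
    rw [map_mul, map_inv, mul_inv_eq_one] at h
    rw [gogEvalTilde_of_mem he, one_mul, mul_one]
    exact h
  · have h := hq _ (Or.inr ⟨e, he, g, rfl⟩)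
    rw [map_mul, map_inv, mul_inv_eq_one, map_mul, map_inv, map_mul, mul_inv_eq_iff_eq_mul] at h
    have h1 : gogEvalTilde bar t Gv Ge T η hGe αv πv (Sum.inr e) = q (gogEin Gv T ⟨e, he⟩) :=
      dif_neg he
    rw [h1]
    exact h

lemma wordVal_gogTrim (w : List ((Σ v : V, αv v) ⊕ E)) :
    wordVal (gogEvalTilde bar t Gv Ge T η hGe αv πv) (gogTrim T αv w) =
      wordVal (gogEvalTilde bar t Gv Ge T η hGe αv πv) w := by
  induction w using List.reverseRecOn with
  | nil => simp [gogTrim]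
  | append_singleton w a ih =>
    by_cases ha : ∃ e : E, a = Sum.inr e ∧ e ∈ T
    · obtain ⟨e, rfl, he⟩ := ha
      rw [gogTrim_append_of_mem he, ih, wordVal_append, wordVal_cons, gogEvalTilde_of_mem he]
      simp [wordVal]
    · rw [gogTrim_append_of_notMem ha]

/-! ### Pushing a vertex group element to the left -/

/-- `InEdge η e v h` says that `v = t e` and that `h ∈ G_v` lies in the image of `η_e`. Equality
in the sigma type makes it possible to state this before `v` and `t e` are identified. -/
def InEdge (η : ∀ e, Ge e →* Gv (t e)) (e : E) (v : V) (h : Gv v) : Prop :=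
  ∃ g : Ge e, (⟨t e, η e g⟩ : Σ v : V, Gv v) = ⟨v, h⟩

/-- Rewriting `e₁t₁⋯e_kt_k g`, with `g` in the terminal vertex group, from right to left: the
edges are kept, the transversal words change, and an element `h` of the initial vertex group
appears on the left. It lies in the image of `η_{ē₁}` if `k > 0`, and this is why no pinch is
created: if `e_{j+1} = ē_j`, then `t_j` is multiplied on the right by an element of the image of
`η_{e_j}`, which cannot turn a nontrivial coset into the trivial one. -/
lemma exists_push
    (hbar : ∀ e, bar (bar e) = e)
    {NTr : ∀ e : E, Set (List (αv (t e)))}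
    (hnil : ∀ e, [] ∈ NTr e)
    (hNTrtr : ∀ e, ∀ g : Gv (t e),
      ∃! w, w ∈ NTr e ∧ wordVal (πv (t e)) w * g⁻¹ ∈ (η e).range)
    {u : V} (g : Gv u) (l : List (Σ e : E, List (αv (t e)))) (v : V)
    (hpath : IsEdgePath (fun e => t (bar e)) t v (l.map Sigma.fst) u)
    (hmem : ∀ s ∈ l, s.2 ∈ NTr s.1)
    (hred : l.IsChain (NoPinch bar t αv)) :
    ∃ (l' : List (Σ e : E, List (αv (t e)))) (h : Gv v),
      l'.map Sigma.fst = l.map Sigma.fst ∧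
      (∀ s ∈ l', s.2 ∈ NTr s.1) ∧
      l'.IsChain (NoPinch bar t αv) ∧
      (∀ s ∈ l'.head?, InEdge η (bar s.1) v h) ∧
      vertexHom bar t Gv Ge T η hGe v h *
          wordVal (gogEvalTilde bar t Gv Ge T η hGe αv πv) (sylWord t αv l') =
        wordVal (gogEvalTilde bar t Gv Ge T η hGe αv πv) (sylWord t αv l) *
          vertexHom bar t Gv Ge T η hGe u g := by
  induction l generalizing v with
  | nil =>
    obtain rfl : v = u := hpath
    exact ⟨[], g, rfl, by simp, by simp, by simp, by simp [sylWord_nil, wordVal]⟩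
  | cons s l ih =>
    obtain ⟨e, y⟩ := s
    obtain ⟨rfl, hpath⟩ := hpath
    rw [List.isChain_cons] at hred
    obtain ⟨l', h, hfst, hmem', hred', hin, hval⟩ :=
      ih (t e) hpath (fun s hs => hmem s (List.mem_cons_of_mem _ hs)) hred.2
    obtain ⟨x, ⟨hxN, c, hc⟩, -⟩ := hNTrtr e (wordVal (πv (t e)) y * h)
    -- `y h = η_e(c⁻¹) x` with `x` in the transversal
    have hyh : wordVal (πv (t e)) y * h = η e c⁻¹ * wordVal (πv (t e)) x := by
      rw [map_inv, hc]; group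
    refine ⟨⟨e, x⟩ :: l', η (bar e) (cast (hGe e).symm c⁻¹), by simp [hfst], ?_, ?_, ?_, ?_⟩
    · intro s hs
      rcases List.mem_cons.1 hs with rfl | hs
      · exact hxN
      · exact hmem' s hs
    · rw [List.isChain_cons]
      refine ⟨?_, hred'⟩
      intro s' hs' (hback : s'.1 = bar e) (hx : x = [])
      obtain ⟨r, hr, hr1⟩ : ∃ r ∈ l.head?, r.1 = s'.1 := by
        have h1 : (l.map Sigma.fst).head? = some s'.1 := by
          rw [← hfst, List.head?_map, hs', Option.map_some]
        rw [List.head?_map, Option.map_eq_some_iff] at h1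
        exact h1
      refine hred.1 r hr (hr1.trans hback) ?_
      show y = []
      have hin' := hin s' hs'
      rw [show bar s'.1 = e by rw [hback, hbar]] at hin'
      obtain ⟨d, hd⟩ := hin'
      obtain rfl : η e d = h := by simpa using hd
      -- `y` represents the trivial coset, as the empty word does
      refine (hNTrtr e 1).unique ⟨hmem ⟨e, y⟩ (by simp), c⁻¹ * d⁻¹, ?_⟩
        ⟨hnil e, 1, by simp [wordVal]⟩
      rw [map_mul, inv_one, mul_one, map_inv (η e) d, eq_comm, eq_mul_inv_iff_mul_eq, hyh, hx]
      simp [wordVal]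
    · intro s hs
      obtain rfl : (⟨e, x⟩ : Σ e : E, List (αv (t e))) = s := by simpa using hs
      exact ⟨_, rfl⟩
    · simp only [sylWord_cons, wordVal_cons, wordVal_append, wordVal_gogLift]
      rw [← mul_assoc, ← gogEvalTilde_mul_vertexHom, mul_assoc, mul_assoc, mul_assoc, ← hval,
        ← mul_assoc (vertexHom bar t Gv Ge T η hGe (t e) _), ← map_mul, ← hyh, map_mul, mul_assoc]

end Helpers

/-- **Lemma (multiplying a normal form by a vertex group word).**
Let `ỹ = w₀e₁t₁⋯e_kt_k ∈ Ñ`, let `w` be a word over the vertex alphabet at `u`, and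
let `f₁⋯f_m` be the unique reduced path in the spanning tree from the terminal vertex
of `ỹ` to `u`.  Then the unique word of `Ñ` representing the same element of `π₁(𝒢)`
as `ỹw` equals `trim(w₀′e₁x₁⋯e_kx_k f₁w₁⋯f_mw_m)` for some `w₀′ ∈ N₀`,
`xᵢ ∈ N_{Tr,eᵢ}` and `w_j ∈ N_{Tr,f_j}`. -/
theorem graph_of_groups_normal_form_multiplication
    {V E : Type} [Fintype V] [Fintype E]
    (bar : E → E) (t : E → V)
    (Gv : V → Type) [instGv : ∀ v, Group (Gv v)]
    (Ge : E → Type) [instGe : ∀ e, Group (Ge e)]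
    (T : Set E)
    (η : ∀ e, Ge e →* Gv (t e)) (hGe : ∀ e, Ge (bar e) = Ge e)
    (hbar : ∀ e, bar (bar e) = e) (hbarne : ∀ e, bar e ≠ e)
    (hGrpBar : ∀ e, HEq (instGe (bar e)) (instGe e))
    (hηinj : ∀ e, Function.Injective (η e))
    (hconn : ∀ u v : V, ∃ p : List E, IsEdgePath (fun e => t (bar e)) t u p v)
    (hTbar : ∀ e ∈ T, bar e ∈ T)
    (hTtree : ∀ u v : V, ∃! p : List E, (∀ e ∈ p, e ∈ T) ∧
      IsEdgePath (fun e => t (bar e)) t u p v ∧ List.Chain' (fun e f => f ≠ bar e) p)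
    (v₀ : V)
    (αv : V → Type) [∀ v, Fintype (αv v)]
    (πv : ∀ v, αv v → Gv v) (invv : ∀ v, αv v → αv v)
    (hgenv : ∀ v, IsInvGenSet (Gv v) (πv v) (invv v))
    (N₀ : Set (List (αv v₀))) (hN₀pc : PrefixClosed N₀)
    (hN₀nf : ∀ g : Gv v₀, ∃! w, w ∈ N₀ ∧ wordVal (πv v₀) w = g)
    (NTr : ∀ e : E, Set (List (αv (t e))))
    (hNTrpc : ∀ e, PrefixClosed (NTr e))
    (hNTrtr : ∀ e, ∀ g : Gv (t e),
      ∃! w, w ∈ NTr e ∧ wordVal (πv (t e)) w * g⁻¹ ∈ (η e).range)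
    -- the data of the word `ỹ = w₀e₁t₁⋯e_kt_k`
    (k : ℕ) (w₀ : List (αv v₀)) (es : Fin k → E)
    (ts : (j : Fin k) → List (αv (t (es j))))
    (hw₀ : w₀ ∈ N₀)
    (hstart : ∀ h : 0 < k, t (bar (es ⟨0, h⟩)) = v₀)
    (hchain : ∀ (j : ℕ) (h : j + 1 < k),
      t (es ⟨j, Nat.lt_of_succ_lt h⟩) = t (bar (es ⟨j + 1, h⟩)))
    (hts : ∀ j : Fin k, ts j ∈ NTr (es j))
    (ytilde : List ((Σ v : V, αv v) ⊕ E))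
    (hy : ytilde = gogLift αv v₀ w₀ ++
      (List.ofFn (fun j : Fin k =>
        Sum.inr (es j) :: gogLift αv (t (es j)) (ts j))).flatten)
    (hyN : ytilde ∈ gogNTilde bar t T αv v₀ N₀ NTr)
    -- the terminal vertex of `ỹ`
    (endV : V)
    (hendV0 : k = 0 → endV = v₀)
    (hendV : ∀ h : 0 < k, endV = t (es ⟨k - 1, Nat.sub_lt h Nat.one_pos⟩))
    -- the word `w` over the vertex alphabet at `u`
    (u : V) (w : List (αv u))
    -- the unique reduced path `f₁⋯f_m` in the tree from `endV` to `u`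
    (f : List E)
    (hfT : ∀ e ∈ f, e ∈ T)
    (hfpath : IsEdgePath (fun e => t (bar e)) t endV f u)
    (hfred : List.Chain' (fun e e' => e' ≠ bar e) f) :
    ∃ w₀' ∈ N₀,
      ∃ xs : (j : Fin k) → List (αv (t (es j))), (∀ j, xs j ∈ NTr (es j)) ∧
      ∃ ws : (j : Fin f.length) → List (αv (t (f.get j))),
        (∀ j, ws j ∈ NTr (f.get j)) ∧
        gogTrim T αv (gogLift αv v₀ w₀' ++
            (List.ofFn (fun j : Fin k =>
              Sum.inr (es j) :: gogLift αv (t (es j)) (xs j))).flatten ++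
            (List.ofFn (fun j : Fin f.length =>
              Sum.inr (f.get j) :: gogLift αv (t (f.get j)) (ws j))).flatten)
          ∈ gogNTilde bar t T αv v₀ N₀ NTr ∧
        wordVal (gogEvalTilde bar t Gv Ge T η hGe αv πv)
          (gogTrim T αv (gogLift αv v₀ w₀' ++
            (List.ofFn (fun j : Fin k =>
              Sum.inr (es j) :: gogLift αv (t (es j)) (xs j))).flatten ++
            (List.ofFn (fun j : Fin f.length =>
              Sum.inr (f.get j) :: gogLift αv (t (f.get j)) (ws j))).flatten)) =
        wordVal (gogEvalTilde bar t Gv Ge T η hGe αv πv) (ytilde ++ gogLift αv u w) := by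
  have hnil : ∀ e, [] ∈ NTr e := fun e => by
    obtain ⟨x, ⟨hx, -⟩, -⟩ := hNTrtr e 1
    exact hNTrpc e x hx [] List.nil_prefix
  set l : List (Σ e : E, List (αv (t e))) := List.ofFn fun j => ⟨es j, ts j⟩ with hl
  -- the syllables of the tree path, with empty transversal words
  set lf : List (Σ e : E, List (αv (t e))) := f.map fun e => ⟨e, []⟩ with hlf
  have hlfst : l.map Sigma.fst = List.ofFn es := by
    simp [hl, List.map_ofFn, Function.comp_def]
  have hlffst : lf.map Sigma.fst = f := by
    simp [hlf, Function.comp_def]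
  -- unique decomposition transfers the conditions of `Ñ` to the given decomposition
  obtain ⟨hred, hlast⟩ : l.IsChain (NoPinch bar t αv) ∧
      ∀ s ∈ l.getLast?, s.2 ≠ [] ∨ s.1 ∉ T := by
    obtain ⟨w₀', -, l', -, -, -, hred', hlast', hw⟩ := mem_gogNTilde_iff.1 hyN
    rw [hy, sylWord_ofFn] at hw
    obtain ⟨-, h⟩ := lift_sylWord_inj _ _ _ _ _ hw
    rw [← hl] at h
    rw [h]
    exact ⟨hred', hlast'⟩
  have hpath : IsEdgePath (fun e => t (bar e)) t v₀ ((l ++ lf).map Sigma.fst) u := by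
    rw [List.map_append, hlfst, hlffst]
    refine IsEdgePath.append (IsEdgePath.of_isChain ?_ ?_ ?_ ?_) hfpath
    · intro h
      exact hendV0 (by simpa using congrArg List.length h)
    · rw [forall_mem_getLast?_ofFn]; exact hendV
    · rw [forall_mem_head?_ofFn]; exact hstart
    · rw [isChain_ofFn_iff]; exact hchain
  have hmem : ∀ s ∈ l ++ lf, s.2 ∈ NTr s.1 := by
    intro s hs
    rcases List.mem_append.1 hs with hs | hs
    · obtain ⟨j, rfl⟩ := List.mem_ofFn.1 hs
      exact hts j
    · obtain ⟨e, -, rfl⟩ := List.mem_map.1 hs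
      exact hnil e
  have hredlf : (l ++ lf).IsChain (NoPinch bar t αv) := by
    refine List.isChain_append.2 ⟨hred, ?_, ?_⟩
    · rw [hlf, List.isChain_map]
      exact hfred.imp fun e e' h h' => absurd h' h
    · intro s hs s' hs' hback hs2
      have hs'T : s'.1 ∈ T := by
        obtain ⟨e, he, rfl⟩ := List.mem_map.1 (List.mem_of_mem_head? hs')
        exact hfT e he
      rcases hlast s hs with h | h
      · exact h hs2
      · rw [hback] at hs'T
        exact h (hbar s.1 ▸ hTbar _ hs'T)
  obtain ⟨l', h, hfst, hmem', hred', -, hval⟩ :=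
    exists_push (T := T) (hGe := hGe) hbar hnil hNTrtr (wordVal (πv u) w) (l ++ lf) v₀
      hpath hmem hredlf
  obtain ⟨w₀', ⟨hw₀', hw₀'val⟩, -⟩ := hN₀nf (wordVal (πv v₀) w₀ * h)
  have hfst' := hfst
  rw [List.map_append, hlfst, hlffst, List.map_eq_append_iff] at hfst'
  obtain ⟨l₁, l₂, rfl, hl₁, hl₂⟩ := hfst'
  obtain ⟨xs, rfl⟩ := exists_ofFn_of_map_fst es l₁ hl₁
  obtain ⟨ws, rfl⟩ := exists_ofFn_of_map_fst f.get l₂ (by rw [hl₂, List.ofFn_get])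
  refine ⟨w₀', hw₀', xs, fun j => ?_, ws, fun j => ?_, ?_, ?_⟩
  · exact hmem' ⟨es j, xs j⟩ (List.mem_append_left _ (List.mem_ofFn.2 ⟨j, rfl⟩))
  · exact hmem' ⟨f.get j, ws j⟩ (List.mem_append_right _ (List.mem_ofFn.2 ⟨j, rfl⟩))
  · rw [sylWord_ofFn, sylWord_ofFn, List.append_assoc, ← sylWord_append]
    obtain ⟨l'', hpre, hlast'', htrim⟩ := exists_gogTrim_eq (T := T) w₀'
      ((List.ofFn fun j => (⟨es j, xs j⟩ : Σ e : E, List (αv (t e)))) ++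
        List.ofFn fun j => ⟨f.get j, ws j⟩)
    rw [htrim, mem_gogNTilde_iff]
    rw [← hfst] at hpath
    obtain ⟨hhead, hch⟩ := hpath.isChain
    rw [List.isChain_map] at hch
    refine ⟨w₀', hw₀', l'', ?_, hch.prefix hpre, fun s hs => hmem' s (hpre.subset hs),
      hred'.prefix hpre, hlast'', rfl⟩
    intro s hs
    obtain ⟨r, hr⟩ := hpre
    refine hhead s.1 ?_
    rw [← hr]
    cases l'' with
    | nil => simp at hs
    | cons a l'' =>
      obtain rfl : a = s := by simpa using hs
      simp
  · rw [wordVal_gogTrim, sylWord_ofFn, sylWord_ofFn, List.append_assoc, ← sylWord_append,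
      wordVal_append, wordVal_gogLift, hw₀'val, map_mul, mul_assoc, hval, hy, sylWord_ofFn,
      ← hl, wordVal_append, wordVal_append, wordVal_gogLift, wordVal_gogLift, sylWord_append,
      wordVal_append]
    -- the tree path evaluates to the identity
    have hlf1 : wordVal (gogEvalTilde bar t Gv Ge T η hGe αv πv) (sylWord t αv lf) = 1 := by
      rw [hlf]
      clear_value l lf
      clear * - hfT
      induction f with
      | nil => rfl
      | cons e f ih =>
        rw [List.map_cons, sylWord_cons, wordVal_cons, gogEvalTilde_of_mem (hfT e (by simp)),
          one_mul]
        exact ih fun e' he' => hfT e' (List.mem_cons_of_mem _ he')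
    rw [hlf1, mul_one, mul_assoc]
end

section
/- Let H be a subgroup of a group G, and suppose that (G,H) is strongly coset automatic over a finite inverse-closed generating set A of G, with regular language L ⊆ A* containing at least one representative of each right coset of H in G and satisfying the H-coset K-fellow traveler property. Then for each h ∈ H with d(1,h) ≤ K and each a ∈ A, the set of pairs L_{h,a} := {(x,y) : x, y ∈ L and π(x)·π(a) = h·π(y)} is a synchronously regular subset of A* × A* (i.e. the corresponding set of padded words is accepted by a finite state automaton). -/
/-- The word metric on `G` with respect to the generating set `(α, π)`. -/
noncomputable def wordDist {G : Type} [Group G] {α : Type} (π : α → G) (g g' : G) : ℕ :=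
  sInf {n : ℕ | ∃ w : List α, wordVal π w = g⁻¹ * g' ∧ w.length = n}

/-- The language `L` satisfies the `H`-coset `K`-fellow traveler property. -/
def CosetFellowTraveler {G : Type} [Group G] {α : Type} (π : α → G) (H : Subgroup G)
    (K : ℕ) (L : Set (List α)) : Prop :=
  ∀ v ∈ L, ∀ w ∈ L, ∀ h ∈ H,
    wordDist π (wordVal π v) (h * wordVal π w) ≤ 1 →
    ∀ i : ℕ, wordDist π (wordVal π (v.take i)) (h * wordVal π (w.take i)) ≤ K

/-- The pair `(G, H)` is strongly coset automatic over the generating set `(α, π, inv)`. -/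
def StronglyCosetAutomatic {G : Type} [Group G] {α : Type}
    (π : α → G) (inv : α → α) (H : Subgroup G) : Prop :=
  IsInvGenSet G π inv ∧
  ∃ (K : ℕ) (L : Set (List α)),
    IsRegularLang L ∧
    (∀ g : G, ∃ w ∈ L, wordVal π w * g⁻¹ ∈ H) ∧
    CosetFellowTraveler π H K L

/-- The pair `(G, H)` is strongly prefix-closed coset automatic over `(α, π, inv)`:
the regular language is in addition prefix-closed and contains exactly one
representative of each right coset of `H` in `G`. -/
def StronglyPrefixClosedCosetAutomatic {G : Type} [Group G] {α : Type}
    (π : α → G) (inv : α → α) (H : Subgroup G) : Prop :=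
  IsInvGenSet G π inv ∧
  ∃ (K : ℕ) (L : Set (List α)),
    IsRegularLang L ∧ PrefixClosed L ∧
    (∀ g : G, ∃! w, w ∈ L ∧ wordVal π w * g⁻¹ ∈ H) ∧
    CosetFellowTraveler π H K L

/-- The pair `c` is the first letter of a padded pair of words exactly when not both components are padding;
once a component is padded, the remaining part of that component is empty. -/
lemma cons_eq_padWord2_iff {α : Type} (c : Option α × Option α) (W : List (Option α × Option α))
    (x y : List α) :
    c :: W = padWord2 (x, y) ↔ c ≠ (none, none) ∧ ∃ x' y' : List α, W = padWord2 (x', y') ∧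
      x = c.1.toList ++ x' ∧ y = c.2.toList ++ y' ∧
      (c.1 = none → x' = []) ∧ (c.2 = none → y' = []) := by
  obtain ⟨p, q⟩ := c
  have h00 : padWord2 (([] : List α), ([] : List α)) = [] := rfl
  have h01 (b : α) (v : List α) : padWord2 ([], b :: v) = (none, some b) :: padWord2 ([], v) := by
    simp [padWord2, List.range_succ_eq_map]
  have h10 (b : α) (v : List α) : padWord2 (b :: v, []) = (some b, none) :: padWord2 (v, []) := by
    simp [padWord2, List.range_succ_eq_map]
  have h11 (b b' : α) (u v : List α) :
      padWord2 (b :: u, b' :: v) = (some b, some b') :: padWord2 (u, v) := by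
    simp [padWord2, List.range_succ_eq_map]
  constructor
  · intro h
    cases x with
    | nil =>
      cases y with
      | nil => simp [h00] at h
      | cons b v =>
        rw [h01] at h
        simp only [List.cons.injEq, Prod.mk.injEq] at h
        obtain ⟨⟨rfl, rfl⟩, rfl⟩ := h
        exact ⟨by simp, [], v, rfl, by simp⟩
    | cons d u =>
      cases y with
      | nil =>
        rw [h10] at h
        simp only [List.cons.injEq, Prod.mk.injEq] at h
        obtain ⟨⟨rfl, rfl⟩, rfl⟩ := h
        exact ⟨by simp, u, [], rfl, by simp⟩
      | cons b v =>
        rw [h11] at h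
        simp only [List.cons.injEq, Prod.mk.injEq] at h
        obtain ⟨⟨rfl, rfl⟩, rfl⟩ := h
        exact ⟨by simp, u, v, rfl, by simp⟩
  · rintro ⟨hc, x', y', rfl, rfl, rfl, hx, hy⟩
    cases p with
    | none =>
      cases q with
      | none => exact absurd rfl hc
      | some b => simp [hx rfl, h01]
    | some d =>
      cases q with
      | none => simp [hy rfl, h10]
      | some b => simp [h11]

lemma nil_eq_padWord2_iff {α : Type} (x y : List α) :
    [] = padWord2 (x, y) ↔ x = [] ∧ y = [] := by
  rw [eq_comm]
  simp [padWord2]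

/-- The value in `G` of a letter or of the padding symbol, which is given the value `1`. -/
def optVal {G : Type} [Group G] {α : Type} (π : α → G) (o : Option α) : G :=
  o.elim 1 π

/-- One step of a DFA on a letter or on the padding symbol, which leaves the state unchanged. -/
def optStep {α σ : Type} (M : DFA α σ) (s : σ) (o : Option α) : σ :=
  o.elim s (M.step s)

lemma wordVal_toList_append {G : Type} [Group G] {α : Type} (π : α → G) (o : Option α)
    (x : List α) : wordVal π (o.toList ++ x) = optVal π o * wordVal π x := by
  cases o <;> simp [wordVal, optVal]

lemma evalFrom_toList_append {α σ : Type} (M : DFA α σ) (s : σ) (o : Option α) (x : List α) :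
    M.evalFrom s (o.toList ++ x) = M.evalFrom (optStep M s o) x := by
  cases o <;> simp [optStep]

lemma take_succ_toList_append {α : Type} (o : Option α) (x : List α) (hx : o = none → x = [])
    (i : ℕ) : (o.toList ++ x).take (i + 1) = o.toList ++ x.take i := by
  cases o with
  | none => simp [hx rfl]
  | some a => simp

open Classical in
/-- The word difference automaton over a set `B` of admissible word differences, with initial
difference `g₀` and target difference `c`. A live state consists of a state of `M` for each
component, two flags recording which components have run into their padding, and the current word
difference; `none` is the dead state. -/
noncomputable def diffDFA {G : Type} [Group G] {α σ : Type} (π : α → G) (M : DFA α σ) (B : Set G)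
    (g₀ : B) (c : G) : DFA (Option α × Option α) (Option (σ × σ × Bool × Bool × B)) where
  step S d := S.bind fun (s, t, ex, ey, g) =>
    if hd : d ≠ (none, none) ∧ (ex → d.1 = none) ∧ (ey → d.2 = none) ∧
        (optVal π d.1)⁻¹ * g * optVal π d.2 ∈ B then
      some (optStep M s d.1, optStep M t d.2, d.1.isNone, d.2.isNone, ⟨_, hd.2.2.2⟩)
    else none
  start := some (M.start, M.start, false, false, g₀)
  accept := {S | ∃ s ∈ M.accept, ∃ t ∈ M.accept, ∃ ex ey, ∃ g : B, g.1 = c ∧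
    S = some (s, t, ex, ey, g)}

lemma diffDFA_evalFrom_none {G : Type} [Group G] {α σ : Type} (π : α → G) (M : DFA α σ)
    (B : Set G) (g₀ : B) (c : G) (W : List (Option α × Option α)) :
    (diffDFA π M B g₀ c).evalFrom none W = none := by
  induction W with
  | nil => rfl
  | cons d W ih => exact ih

/-- The words accepted from a live state: padded pairs of words that respect the padding flags,
are accepted by `M` from the two recorded states, and whose word differences, starting from the
recorded one, stay in `B` and end at `c`. -/
lemma diffDFA_evalFrom_mem {G : Type} [Group G] {α σ : Type} (π : α → G) (M : DFA α σ)
    (B : Set G) (g₀ : B) (c : G) (W : List (Option α × Option α)) :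
    ∀ (s t : σ) (ex ey : Bool) (g : B),
      (diffDFA π M B g₀ c).evalFrom (some (s, t, ex, ey, g)) W ∈ (diffDFA π M B g₀ c).accept ↔
        ∃ x y : List α, W = padWord2 (x, y) ∧ (ex → x = []) ∧ (ey → y = []) ∧
          M.evalFrom s x ∈ M.accept ∧ M.evalFrom t y ∈ M.accept ∧
          (∀ i, (wordVal π (x.take i))⁻¹ * g * wordVal π (y.take i) ∈ B) ∧
          (wordVal π x)⁻¹ * g * wordVal π y = c := by
  induction W with
  | nil =>
    intro s t ex ey g
    simp only [nil_eq_padWord2_iff, DFA.evalFrom_nil]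
    constructor
    · rintro ⟨s', hs, t', ht, ex', ey', g', hg, h⟩
      simp only [Option.some.injEq, Prod.mk.injEq] at h
      obtain ⟨rfl, rfl, rfl, rfl, rfl⟩ := h
      exact ⟨[], [], by simp, by simp, by simp, by simpa, by simpa, by simp [wordVal],
        by simpa [wordVal]⟩
    · rintro ⟨x, y, ⟨rfl, rfl⟩, -, -, hs, ht, -, hg⟩
      exact ⟨s, hs, t, ht, ex, ey, g, by simpa [wordVal] using hg, rfl⟩
  | cons d W ih =>
    intro s t ex ey g
    rw [DFA.evalFrom_cons]
    by_cases hd : d ≠ (none, none) ∧ (ex → d.1 = none) ∧ (ey → d.2 = none) ∧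
        (optVal π d.1)⁻¹ * g * optVal π d.2 ∈ B
    · have hstep : (diffDFA π M B g₀ c).step (some (s, t, ex, ey, g)) d =
          some (optStep M s d.1, optStep M t d.2, d.1.isNone, d.2.isNone, ⟨_, hd.2.2.2⟩) := by
        simp only [diffDFA, Option.bind_some]
        rw [dif_pos hd]
      rw [hstep, ih]
      constructor
      · rintro ⟨x, y, rfl, hx, hy, hs, ht, hB, hc⟩
        simp only [Option.isNone_iff_eq_none] at hx hy
        refine ⟨d.1.toList ++ x, d.2.toList ++ y,
          (cons_eq_padWord2_iff _ _ _ _).2 ⟨hd.1, x, y, rfl, rfl, rfl, hx, hy⟩, ?_, ?_,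
          by rwa [evalFrom_toList_append], by rwa [evalFrom_toList_append], ?_, ?_⟩
        · intro h
          simp [hd.2.1 h, hx (hd.2.1 h)]
        · intro h
          simp [hd.2.2.1 h, hy (hd.2.2.1 h)]
        · rintro (_ | i)
          · simp [wordVal]
          · rw [take_succ_toList_append _ _ hx, take_succ_toList_append _ _ hy,
              wordVal_toList_append, wordVal_toList_append]
            simpa [mul_assoc] using hB i
        · rw [wordVal_toList_append, wordVal_toList_append]
          simpa [mul_assoc] using hc
      · rintro ⟨x, y, hW, hex, hey, hs, ht, hB, hc⟩
        obtain ⟨-, x, y, rfl, rfl, rfl, hx, hy⟩ := (cons_eq_padWord2_iff _ _ _ _).1 hW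
        refine ⟨x, y, rfl, by simpa using hx, by simpa using hy,
          by rwa [evalFrom_toList_append] at hs, by rwa [evalFrom_toList_append] at ht, ?_, ?_⟩
        · intro i
          have := hB (i + 1)
          rw [take_succ_toList_append _ _ hx, take_succ_toList_append _ _ hy,
              wordVal_toList_append, wordVal_toList_append] at this
          simpa [mul_assoc] using this
        · rw [wordVal_toList_append, wordVal_toList_append] at hc
          simpa [mul_assoc] using hc
    · have hstep : (diffDFA π M B g₀ c).step (some (s, t, ex, ey, g)) d = none := by
        simp only [diffDFA, Option.bind_some]
        rw [dif_neg hd]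
      rw [hstep, diffDFA_evalFrom_none]
      constructor
      · rintro ⟨s', -, t', -, ex', ey', g', -, h⟩
        simp at h
      · rintro ⟨x, y, hW, hex, hey, hs, ht, hB, hc⟩
        obtain ⟨hne, x, y, rfl, rfl, rfl, hx, hy⟩ := (cons_eq_padWord2_iff _ _ _ _).1 hW
        refine absurd ⟨hne, fun h => ?_, fun h => ?_, ?_⟩ hd
        · simpa using (List.append_eq_nil_iff.1 (hex h)).1
        · simpa using (List.append_eq_nil_iff.1 (hey h)).1
        · have := hB 1
          rw [← zero_add 1, take_succ_toList_append _ _ hx, take_succ_toList_append _ _ hy,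
              wordVal_toList_append, wordVal_toList_append] at this
          simpa [wordVal] using this

lemma wordVal_surjective {G : Type} [Group G] {α : Type} {π : α → G} {inv : α → α}
    (hgen : IsInvGenSet G π inv) (g : G) : ∃ w : List α, wordVal π w = g := by
  have hg : g ∈ Subgroup.closure (Set.range π) := by simp [hgen.gen]
  induction hg using Subgroup.closure_induction with
  | mem x hx =>
    obtain ⟨a, rfl⟩ := hx
    exact ⟨[a], by simp [wordVal]⟩
  | one => exact ⟨[], rfl⟩
  | mul x y _ _ hx hy =>
    obtain ⟨u, rfl⟩ := hx
    obtain ⟨v, rfl⟩ := hy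
    exact ⟨u ++ v, by simp [wordVal]⟩
  | inv x _ hx =>
    obtain ⟨u, rfl⟩ := hx
    refine ⟨(u.map inv).reverse, ?_⟩
    simp [wordVal, List.prod_inv_reverse, Function.comp_def, hgen.val_inv]

/-- The ball of radius `K` about `1`, as the set of values of words of length at most `K`. -/
def wordBall {G : Type} [Group G] {α : Type} (π : α → G) (K : ℕ) : Set G :=
  wordVal π '' {w | w.length ≤ K}

lemma wordBall_finite {G : Type} [Group G] {α : Type} [Finite α] (π : α → G) (K : ℕ) :
    (wordBall π K).Finite :=
  (List.finite_length_le α K).image _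

/-- Since the letters generate `G`, the infimum defining `wordDist` is attained rather than being
the junk value `0` of an empty infimum. -/
lemma mem_wordBall_of_wordDist_le {G : Type} [Group G] {α : Type} {π : α → G} {inv : α → α}
    (hgen : IsInvGenSet G π inv) {K : ℕ} {g g' : G} (h : wordDist π g g' ≤ K) :
    g⁻¹ * g' ∈ wordBall π K := by
  obtain ⟨u, hu⟩ := wordVal_surjective hgen (g⁻¹ * g')
  obtain ⟨w, hw, hlen⟩ := Nat.sInf_mem (s := {n : ℕ | ∃ w : List α,
    wordVal π w = g⁻¹ * g' ∧ w.length = n}) ⟨_, u, hu, rfl⟩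
  exact ⟨w, hlen.trans_le h, hw⟩

/-- **Proposition (Holt–Hurt).** If `(G,H)` is strongly coset automatic with coset
fellow-traveling regular language `L` of representatives of the right cosets of `H`
in `G`, then for each `h ∈ H` in the ball of radius `K` and each generator `a`, the
set of pairs `L_{h,a} = {(x,y) : x,y ∈ L, xa =_G hy}` is synchronously regular. -/
theorem strongly_coset_automatic_multiplier_regular
    {G : Type} [Group G] {α : Type} [Fintype α]
    (π : α → G) (inv : α → α) (hgen : IsInvGenSet G π inv)
    (H : Subgroup G) (K : ℕ) (L : Set (List α))
    (hLreg : IsRegularLang L)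
    (hLrep : ∀ g : G, ∃ w ∈ L, wordVal π w * g⁻¹ ∈ H)
    (hft : CosetFellowTraveler π H K L) :
    ∀ h ∈ H, wordDist π 1 h ≤ K → ∀ a : α,
      SyncRegular2 {p : List α × List α |
        p.1 ∈ L ∧ p.2 ∈ L ∧ wordVal π p.1 * π a = h * wordVal π p.2} := by
  intro h hh hhK a
  obtain ⟨σ, _, M, rfl⟩ := hLreg
  have hB : h ∈ wordBall π K := by simpa using mem_wordBall_of_wordDist_le hgen hhK
  have : Finite (wordBall π K) := wordBall_finite π K
  refine ⟨_, Fintype.ofFinite _, diffDFA π M (wordBall π K) ⟨h, hB⟩ (π a), ?_⟩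
  ext W
  refine (diffDFA_evalFrom_mem π M _ ⟨h, hB⟩ (π a) W M.start M.start false false ⟨h, hB⟩).trans ?_
  constructor
  · rintro ⟨x, y, rfl, -, -, hx, hy, -, hc⟩
    exact ⟨(x, y), ⟨hx, hy, by rw [← hc]; group⟩, rfl⟩
  · rintro ⟨⟨x, y⟩, ⟨hx, hy, hxy⟩, rfl⟩
    have hc : (wordVal π x)⁻¹ * (h * wordVal π y) = π a := by
      rw [← hxy, inv_mul_cancel_left]
    have hdist : wordDist π (wordVal π x) (h * wordVal π y) ≤ 1 :=
      Nat.sInf_le ⟨[a], by simp [wordVal, ← hc], rfl⟩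
    refine ⟨x, y, rfl, by simp, by simp, hx, hy, fun i => ?_, by rw [mul_assoc, hc]⟩
    rw [mul_assoc]
    exact mem_wordBall_of_wordDist_le hgen (hft x hx y hy h hh hdist i)
end
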